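/- arXiv:1506.05390 — 3 statements merged into one kernel-verified Lean document; each statement's English description precedes it below -/
import Mathlib

section
/- Let F be a finite extension of ℚ₂ of degree d = [F : ℚ₂]. Then the quotient group F^× / (F^×)² of the multiplicative group of F by its subgroup of squares is finite of order 2^(2+d). -/
/-!
The integral closure `B` of `ℤ₂` in `F` is a complete discrete valuation ring, free of rank `d` over
`ℤ₂`, so `Fˣ ≃ Bˣ × ℤ` and the second factor contributes `2` to the index of the squares. For an
endomorphism `f` of an abelian group and a subgroup `H` of finite index with `f H ≤ H`, the index of
the image of `f` equals `[ker f : ker f ∩ H] * [H : f H]`. Take for `f` the squaring map of `Bˣ` and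
`H = 1 + 2J` with `J` a small ideal: since `(1 + 2t)² = 1 + 4(t + t²)`, Hensel's lemma gives
`f H = 1 + 4J`, and `[1 + 2J : 1 + 4J] = [2J : 4J] = [B : 2B] = 2 ^ d`. The kernel `{1, -1}`
meets `H` trivially and contributes the remaining factor `2`.
-/

open IsLocalRing

section Index

@[to_additive]
theorem index_monoidHom_range_of_map_le {G : Type*} [CommGroup G] (f : G →* G)
    {H : Subgroup G} (hH : H.index ≠ 0) (hf : H.map f ≤ H) :
    f.range.index = H.relIndex f.ker * (H.map f).relIndex H := by
  have hsup : (H ⊔ f.ker).index ≠ 0 := fun h0 =>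
    hH (Nat.eq_zero_of_zero_dvd (h0 ▸ Subgroup.index_dvd_of_le le_sup_left))
  have hker : H.relIndex f.ker * (H ⊔ f.ker).index = H.index := by
    rw [← Subgroup.relIndex_sup_left, Subgroup.relIndex_mul_index le_sup_left]
  refine mul_left_cancel₀ hsup ?_
  calc (H ⊔ f.ker).index * f.range.index
      = (H.map f).relIndex H * H.index := by
        rw [← Subgroup.index_map, Subgroup.relIndex_mul_index hf]
    _ = (H ⊔ f.ker).index * (H.relIndex f.ker * (H.map f).relIndex H) := by
        rw [← hker]
        ring

variable {G G' : Type*} [CommGroup G] [CommGroup G']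

theorem index_powMonoidHom_range_prod (n : ℕ) :
    (powMonoidHom n : G × G' →* G × G').range.index =
      (powMonoidHom n : G →* G).range.index * (powMonoidHom n : G' →* G').range.index := by
  rw [← Subgroup.index_prod, ← MonoidHom.range_prodMap]
  rfl

theorem index_powMonoidHom_range_congr (e : G ≃* G') (n : ℕ) :
    (powMonoidHom n : G →* G).range.index = (powMonoidHom n : G' →* G').range.index := by
  have hcomap : (powMonoidHom n : G →* G).range =
      (powMonoidHom n : G' →* G').range.comap (e : G →* G') := by
    ext x
    constructor
    · rintro ⟨y, rfl⟩
      exact ⟨e y, by simp⟩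
    · rintro ⟨y, hy⟩
      exact ⟨e.symm y, e.injective (by simpa using hy)⟩
  rw [hcomap, Subgroup.index_comap_of_surjective _ e.surjective]

theorem index_powMonoidHom_range_multiplicative_int (n : ℕ) :
    (powMonoidHom n : Multiplicative ℤ →* Multiplicative ℤ).range.index = n := by
  have hrange : (powMonoidHom n : Multiplicative ℤ →* Multiplicative ℤ).range =
      (AddSubgroup.zmultiples (n : ℤ)).toSubgroup := by
    ext x
    change (∃ k : ℤ, n • k = x.toAdd) ↔ ∃ k : ℤ, k • (n : ℤ) = x.toAdd
    simp only [nsmul_eq_mul, zsmul_eq_mul, Int.cast_id, mul_comm]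
  rw [hrange, AddSubgroup.index_toSubgroup, Int.index_zmultiples, Int.natAbs_natCast]

end Index

section PrincipalUnits

variable {R : Type*} [CommRing R]

/-- The group `1 + I` of units of `R` congruent to `1` modulo the ideal `I`. For the maximal ideal
of a local ring, and its powers, these are the (higher) principal units. -/
def principalUnits (I : Ideal R) : Subgroup Rˣ :=
  (Units.map (Ideal.Quotient.mk I : R →* R ⧸ I)).ker

theorem mem_principalUnits_iff {I : Ideal R} {u : Rˣ} :
    u ∈ principalUnits I ↔ (u : R) - 1 ∈ I := by
  rw [principalUnits, MonoidHom.mem_ker, Units.ext_iff, ← Ideal.Quotient.eq]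
  rfl

theorem principalUnits_mono {I J : Ideal R} (h : J ≤ I) : principalUnits J ≤ principalUnits I :=
  fun _ hu => mem_principalUnits_iff.2 (h (mem_principalUnits_iff.1 hu))

theorem index_principalUnits_ne_zero (I : Ideal R) [Finite (R ⧸ I)] :
    (principalUnits I).index ≠ 0 := by
  rw [principalUnits, Subgroup.index_ker]
  exact Nat.card_pos.ne'

theorem bijective_principalUnits_sub_one {I : Ideal R} (hI : I ≤ Ideal.jacobson ⊥) :
    Function.Bijective fun u : principalUnits I =>
      (⟨((u : Rˣ) : R) - 1, mem_principalUnits_iff.1 u.2⟩ : I.toAddSubgroup) := by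
  refine ⟨fun u v huv => Subtype.ext (Units.ext (sub_left_injective (Subtype.ext_iff.1 huv))),
    fun x => ?_⟩
  obtain ⟨u, hu⟩ : IsUnit ((x : R) + 1) :=
    Ideal.isUnit_of_sub_one_mem_jacobson_bot _ (hI (by simp))
  have hux : (u : R) - 1 = x := by rw [hu, add_sub_cancel_right]
  exact ⟨⟨u, mem_principalUnits_iff.2 (hux ▸ x.2)⟩, Subtype.ext hux⟩

theorem relIndex_principalUnits {I : Ideal R} (hI : I ≤ Ideal.jacobson ⊥) (J : Ideal R) :
    (principalUnits J).relIndex (principalUnits I) =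
      J.toAddSubgroup.relIndex I.toAddSubgroup := by
  -- `u ↦ u - 1` is not a homomorphism, but it carries cosets of `1 + J` to cosets of `J`.
  refine Nat.card_congr (Quotient.congr
    (.ofBijective _ (bijective_principalUnits_sub_one hI)) fun u v => ?_)
  have hsub : ((v : Rˣ) : R) - (u : Rˣ) = (u : Rˣ) * (((u⁻¹ * v : principalUnits I) : Rˣ) - 1) := by
    simp [mul_sub]
  rw [QuotientGroup.leftRel_apply, QuotientAddGroup.leftRel_apply, Subgroup.mem_subgroupOf,
    AddSubgroup.mem_addSubgroupOf, mem_principalUnits_iff]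
  change _ ↔ -((u : Rˣ) - 1 : R) + ((v : Rˣ) - 1 : R) ∈ J
  rw [neg_add_eq_sub, sub_sub_sub_cancel_right, hsub, Ideal.unit_mul_mem_iff_mem J (u : Rˣ).isUnit]

end PrincipalUnits

section Quotients

variable {R : Type*} [CommRing R]

theorem relIndex_toAddSubgroup_span_singleton_mul [IsDomain R] {a : R} (ha : a ≠ 0) (J : Ideal R)
    [Finite (R ⧸ J)] :
    (Ideal.span {a} * J).toAddSubgroup.relIndex J.toAddSubgroup =
      Nat.card (R ⧸ Ideal.span {a}) := by
  have hrange : (AddMonoidHom.mulLeft a).range = (Ideal.span {a}).toAddSubgroup := by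
    ext x
    simp [Ideal.mem_span_singleton', mul_comm]
  have hmap : J.toAddSubgroup.map (AddMonoidHom.mulLeft a) =
      (Ideal.span {a} * J).toAddSubgroup := by
    ext x
    simp [Ideal.mem_span_singleton_mul]
  have hker : (AddMonoidHom.mulLeft a).ker = ⊥ :=
    (AddMonoidHom.ker_eq_bot_iff _).2 (mul_right_injective₀ ha)
  have hJ : J.toAddSubgroup.index ≠ 0 := Nat.card_pos (α := R ⧸ J).ne'
  have hle : (Ideal.span {a} * J).toAddSubgroup ≤ J.toAddSubgroup :=
    Submodule.toAddSubgroup_mono Ideal.mul_le_right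
  have hindex :=
    index_addMonoidHom_range_of_map_le (AddMonoidHom.mulLeft a) hJ (hmap.trans_le hle)
  rw [hmap, hker, AddSubgroup.relIndex_bot_right, one_mul, hrange] at hindex
  exact hindex.symm

theorem finite_quotient_span_singleton_mul (a : R) (J : Ideal R) [Finite (R ⧸ Ideal.span {a})]
    [Finite (R ⧸ J)] : Finite (R ⧸ Ideal.span {a} * J) := by
  rw [mul_comm, ← smul_eq_mul]
  exact Submodule.finite_quotient_smul J ⟨{a}, by simp⟩

theorem finite_quotient_span_singleton [IsDomain R] [IsDiscreteValuationRing R]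
    [Finite (ResidueField R)] {a : R} (ha : a ≠ 0) : Finite (R ⧸ Ideal.span {a}) := by
  obtain ⟨ϖ, hϖ⟩ := IsDiscreteValuationRing.exists_irreducible R
  obtain ⟨n, hn⟩ := IsDiscreteValuationRing.ideal_eq_span_pow_irreducible
    (s := Ideal.span {a}) (by simpa) hϖ
  rw [finite_quotient_iff]
  exact ⟨n, by rw [hn, hϖ.maximalIdeal_eq, Ideal.span_singleton_pow]⟩

theorem finite_quotient_map (I : Ideal R) [Finite (R ⧸ I)] (S : Type*) [CommRing S] [Algebra R S]
    [Module.Finite R S] : Finite (S ⧸ I.map (algebraMap R S)) := by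
  have := Submodule.finite_quotient_smul I (Module.Finite.fg_top (R := R) (M := S))
  rwa [Ideal.smul_top_eq_map] at this

theorem natCard_quotient_smul_top [Nontrivial R] (I : Ideal R) (M : Type*) [AddCommGroup M]
    [Module R M] [Module.Free R M] [Module.Finite R M] :
    Nat.card (M ⧸ I • (⊤ : Submodule R M)) = Nat.card (R ⧸ I) ^ Module.finrank R M := by
  let b := (Module.Free.chooseBasis R M).baseChange (R ⧸ I)
  rw [← Nat.card_congr (TensorProduct.quotTensorEquivQuotSMul M I).toEquiv,
    Nat.card_congr b.equivFun.toEquiv, Nat.card_fun,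
    Nat.card_eq_fintype_card (α := Module.Free.ChooseBasisIndex R M),
    Module.finrank_eq_card_chooseBasisIndex]

theorem natCard_quotient_map [Nontrivial R] (I : Ideal R) (S : Type*) [CommRing S] [Algebra R S]
    [Module.Free R S] [Module.Finite R S] :
    Nat.card (S ⧸ I.map (algebraMap R S)) = Nat.card (R ⧸ I) ^ Module.finrank R S := by
  rw [← natCard_quotient_smul_top, Ideal.smul_top_eq_map]
  rfl

end Quotients

section SquaresOfUnits

variable {R : Type*} [CommRing R]

theorem exists_mem_add_sq_eq {I J : Ideal R} [HenselianRing R I] (hJ : J ≤ I) {y : R}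
    (hy : y ∈ J) : ∃ t ∈ J, t + t ^ 2 = y := by
  obtain ⟨t, ht, htI⟩ := HenselianRing.is_henselian (I := I)
    (Polynomial.X ^ 2 + Polynomial.X - Polynomial.C y)
    (by monicity!) 0 (by simpa using hJ hy) (by simp)
  obtain ⟨u, hu⟩ : IsUnit (1 + t) :=
    Ideal.isUnit_of_sub_one_mem_jacobson_bot _ (HenselianRing.jac (by simpa using htI))
  have hty : t + t ^ 2 = y := by
    simpa [sub_eq_zero, add_comm] using ht
  have htu : t * u = y := by
    rw [hu, ← hty]
    ring
  exact ⟨t, (Ideal.mul_unit_mem_iff_mem J u.isUnit).1 (htu ▸ hy), hty⟩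

theorem map_sq_principalUnits {I J : Ideal R} [HenselianRing R I] (hJ : J ≤ I) :
    (principalUnits (Ideal.span {(2 : R)} * J)).map (powMonoidHom 2) =
      principalUnits (Ideal.span {(2 : R)} * (Ideal.span {(2 : R)} * J)) := by
  ext v
  simp only [Subgroup.mem_map, mem_principalUnits_iff, ← mul_assoc,
    Ideal.span_singleton_mul_span_singleton, Ideal.mem_span_singleton_mul, powMonoidHom_apply]
  constructor
  · rintro ⟨u, ⟨t, ht, htu⟩, rfl⟩
    refine ⟨t + t ^ 2, J.add_mem ht (J.pow_mem_of_mem ht 2 two_pos), ?_⟩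
    rw [Units.val_pow_eq_pow_val, ← sub_add_cancel (u : R) 1, ← htu]
    ring
  · rintro ⟨y, hy, hyv⟩
    obtain ⟨t, ht, hty⟩ := exists_mem_add_sq_eq hJ hy
    have hsq : (1 + 2 * t) ^ 2 = v := by
      rw [← sub_add_cancel (v : R) 1, ← hyv, ← hty]
      ring
    obtain ⟨u, hu⟩ := (isUnit_pow_iff two_ne_zero).1 (hsq ▸ v.isUnit)
    exact ⟨u, ⟨t, ht, by rw [hu, add_sub_cancel_left]⟩, Units.ext (by simp [hu, hsq])⟩

theorem relIndex_principalUnits_ker_sq [IsDomain R] (h2 : (2 : R) ≠ 0) {J : Ideal R}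
    (hJ : J ≠ ⊤) :
    (principalUnits (Ideal.span {(2 : R)} * J)).relIndex (powMonoidHom 2 : Rˣ →* Rˣ).ker = 2 := by
  rw [Subgroup.relIndex_eq_two_iff_exists_notMem_and]
  refine ⟨-1, by simp [MonoidHom.mem_ker], fun hmem => ?_, fun u hu => ?_⟩
  · obtain ⟨z, hz, hz2⟩ := Ideal.mem_span_singleton_mul.1 (mem_principalUnits_iff.1 hmem)
    have hz1 : z = -1 := mul_left_cancel₀ h2 (by rw [hz2]; push_cast; ring)
    exact hJ ((Ideal.eq_top_iff_one J).2 (by simpa [hz1] using hz))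
  · have huu : u * u = 1 := by rwa [← sq]
    rcases (Units.inv_eq_self_iff u).1 (inv_eq_of_mul_eq_one_left huu) with rfl | rfl
    · exact .inr (one_mem _)
    · exact .inl (by simp)

theorem index_powMonoidHom_two_range_units [IsDomain R] (h2 : (2 : R) ≠ 0) {I : Ideal R}
    [HenselianRing R I] [Finite (R ⧸ I)] [Finite (R ⧸ Ideal.span {(2 : R)})] :
    (powMonoidHom 2 : Rˣ →* Rˣ).range.index = 2 * Nat.card (R ⧸ Ideal.span {(2 : R)}) := by
  have hI : I ≤ Ideal.jacobson ⊥ := HenselianRing.jac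
  have hI_top : I ≠ ⊤ := ne_top_of_le_ne_top (Ideal.jacobson_eq_top_iff.not.2 bot_ne_top) hI
  have hle (J : Ideal R) : Ideal.span {(2 : R)} * J ≤ J := Ideal.mul_le_right
  have : Finite (R ⧸ Ideal.span {(2 : R)} * I) := finite_quotient_span_singleton_mul 2 I
  have hmap := map_sq_principalUnits (le_refl I)
  rw [index_monoidHom_range_of_map_le _
      (index_principalUnits_ne_zero (Ideal.span {(2 : R)} * I))
      (hmap.trans_le (principalUnits_mono (hle _))),
    relIndex_principalUnits_ker_sq h2 hI_top, hmap,
    relIndex_principalUnits ((hle I).trans hI), relIndex_toAddSubgroup_span_singleton_mul h2]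

end SquaresOfUnits

section FractionField

theorem eq_zero_of_unit_mul_zpow_eq_one {R K : Type*} [CommRing R] [Field K] [Algebra R K]
    [FaithfulSMul R K] {a : R} (ha : a ≠ 0) (ha' : ¬IsUnit a) (u : Rˣ) {n : ℤ}
    (h : algebraMap R K u * algebraMap R K a ^ n = 1) : n = 0 := by
  have hinj : Function.Injective (algebraMap R K) := FaithfulSMul.algebraMap_injective R K
  have ha0 : algebraMap R K a ≠ 0 := (map_ne_zero_iff _ hinj).2 ha
  obtain ⟨k, hk⟩ := n.eq_nat_or_neg
  suffices hunit : IsUnit (a ^ k) by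
    have hk0 : k = 0 := by_contra fun hk0 => ha' ((isUnit_pow_iff hk0).1 hunit)
    simpa [hk0] using hk
  rcases hk with rfl | rfl
  · have hmul : (u : R) * a ^ k = 1 := hinj (by simpa using h)
    exact .of_mul_eq_one_right _ hmul
  · have hpow : (u : R) = a ^ k := hinj (by simpa [mul_inv_eq_one₀, ha0] using h)
    exact hpow ▸ u.isUnit

variable (R K : Type*) [CommRing R] [IsDomain R] [IsDiscreteValuationRing R] [Field K]
  [Algebra R K] [IsFractionRing R K]

theorem nonempty_units_prod_int_mulEquiv : Nonempty (Rˣ × Multiplicative ℤ ≃* Kˣ) := by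
  obtain ⟨ϖ, hϖ⟩ := IsDiscreteValuationRing.exists_irreducible R
  have hinj : Function.Injective (algebraMap R K) := IsFractionRing.injective R K
  have hϖ0 : algebraMap R K ϖ ≠ 0 := (map_ne_zero_iff _ hinj).2 hϖ.ne_zero
  let f : Rˣ × Multiplicative ℤ →* Kˣ :=
    (Units.map (algebraMap R K : R →* K)).coprod (zpowersHom Kˣ (Units.mk0 _ hϖ0))
  have hf (u : Rˣ) (n : ℤ) :
      (f (u, .ofAdd n) : K) = algebraMap R K u * algebraMap R K ϖ ^ n := by simp [f]
  refine ⟨.ofBijective f ⟨(injective_iff_map_eq_one f).2 ?_, fun x => ?_⟩⟩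
  · rintro ⟨u, n⟩ h
    have hun : algebraMap R K u * algebraMap R K ϖ ^ n.toAdd = 1 := by
      rw [← hf, ofAdd_toAdd, h, Units.val_one]
    have hn : n.toAdd = 0 := eq_zero_of_unit_mul_zpow_eq_one hϖ.ne_zero hϖ.not_isUnit u hun
    have hu : u = 1 := Units.ext (hinj (by simpa [hn] using hun))
    exact Prod.ext hu hn
  · obtain ⟨n, u, hx⟩ :=
      IsDiscreteValuationRing.exists_units_eq_smul_zpow_of_irreducible hϖ x.ne_zero
    exact ⟨(u, .ofAdd n), Units.ext (by rw [hf, hx, Units.smul_def, Algebra.smul_def])⟩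

theorem index_powMonoidHom_range_units_fractionRing (n : ℕ) :
    (powMonoidHom n : Kˣ →* Kˣ).range.index = (powMonoidHom n : Rˣ →* Rˣ).range.index * n := by
  obtain ⟨e⟩ := nonempty_units_prod_int_mulEquiv R K
  rw [← index_powMonoidHom_range_congr e, index_powMonoidHom_range_prod,
    index_powMonoidHom_range_multiplicative_int]

end FractionField

section HenselianDomain

variable {R : Type*} [CommRing R]

theorem exists_isIdempotentElem_mul_pow_mul_eq_pow [IsArtinianRing R] (x : R) :
    ∃ (y : R) (n : ℕ), IsIdempotentElem (x * y) ∧ x ^ n * (x * y) = x ^ n := by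
  obtain ⟨n, y, hy⟩ := IsArtinian.exists_pow_succ_smul_dvd x (1 : R)
  have hpow (k : ℕ) : x ^ n * (x * y) ^ k = x ^ n := by
    induction k with
    | zero => simp
    | succ k ih =>
      rw [pow_succ', ← mul_assoc, ← mul_assoc, ← pow_succ, ← smul_eq_mul (x ^ (n + 1)), hy,
        smul_eq_mul, mul_one, ih]
  have hfix : x ^ n * (x * y) ^ (n + 1) = x ^ n := hpow _
  refine ⟨y * (x * y) ^ n, n, ?_, by rw [← mul_assoc x, ← pow_succ', hfix]⟩
  rw [← mul_assoc x, ← pow_succ', IsIdempotentElem]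
  linear_combination x * y ^ (n + 1) * hfix

theorem isNilpotent_or_isUnit_of_isIdempotentElem [IsArtinianRing R]
    (h : ∀ e : R, IsIdempotentElem e → e = 0 ∨ e = 1) (x : R) : IsNilpotent x ∨ IsUnit x := by
  obtain ⟨y, n, he, hx⟩ := exists_isIdempotentElem_mul_pow_mul_eq_pow x
  rcases h _ he with h0 | h1
  · exact .inl ⟨n, by rw [← hx, h0, mul_zero]⟩
  · exact .inr (.of_mul_eq_one _ h1)

theorem eq_zero_or_eq_one_of_isIdempotentElem_quotient [IsDomain R] {I : Ideal R}
    [HenselianRing R I] (e : R ⧸ I) (he : IsIdempotentElem e) : e = 0 ∨ e = 1 := by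
  obtain ⟨x, rfl⟩ := Ideal.Quotient.mk_surjective e
  have hderiv : IsUnit (2 * Ideal.Quotient.mk I x - 1) :=
    .of_mul_eq_one (2 * Ideal.Quotient.mk I x - 1) (by linear_combination 4 * he.eq)
  obtain ⟨a, ha, hax⟩ := HenselianRing.is_henselian (I := I)
    (Polynomial.X ^ 2 - Polynomial.X) (by monicity!) x
    (by simpa [← Ideal.Quotient.eq_zero_iff_mem, sub_eq_zero, sq] using he.eq)
    (by simpa [map_ofNat, one_add_one_eq_two] using hderiv)
  have haa : IsIdempotentElem a := by
    rw [IsIdempotentElem, ← sub_eq_zero]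
    simpa [sq] using ha
  rw [← Ideal.Quotient.eq.2 hax]
  rcases IsIdempotentElem.iff_eq_zero_or_one.1 haa with rfl | rfl
  · exact .inl (map_zero _)
  · exact .inr (map_one _)

theorem isLocalRing_of_henselianRing [IsDomain R] (I : Ideal R) [HenselianRing R I]
    [IsArtinianRing (R ⧸ I)] : IsLocalRing R := by
  have : IsLocalHom (Ideal.Quotient.mk I) := isLocalHom_of_le_jacobson_bot I HenselianRing.jac
  refine .of_isUnit_or_isUnit_one_sub_self fun x => ?_
  rcases isNilpotent_or_isUnit_of_isIdempotentElem
    eq_zero_or_eq_one_of_isIdempotentElem_quotient (Ideal.Quotient.mk I x) with hx | hx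
  · exact .inr (.of_map (Ideal.Quotient.mk I) _ (by simpa using hx.isUnit_one_sub))
  · exact .inl (.of_map (Ideal.Quotient.mk I) _ hx)

end HenselianDomain

section FiniteExtension

theorem isPrecomplete_of_finite {A : Type*} [CommRing A] (I : Ideal A) (M : Type*)
    [AddCommGroup M] [Module A M] [IsPrecomplete I A] [Module.Finite A M] :
    IsPrecomplete I M := by
  rw [← AdicCompletion.of_surjective_iff]
  intro x
  obtain ⟨t, rfl⟩ := AdicCompletion.ofTensorProduct_surjective_of_finite I M x
  induction t with
  | zero => exact ⟨0, by simp⟩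
  | add s t hs ht =>
    obtain ⟨m, hm⟩ := hs
    obtain ⟨m', hm'⟩ := ht
    exact ⟨m + m', by rw [map_add, map_add, hm, hm']⟩
  | tmul a m =>
    obtain ⟨a, rfl⟩ := AdicCompletion.of_surjective I A a
    refine ⟨a • m, ?_⟩
    ext k
    rw [AdicCompletion.ofTensorProduct_tmul]
    rfl

variable (A B : Type*) [CommRing A] [CommRing B] [Algebra A B] [Module.Finite A B]

theorem isAdicComplete_map_maximalIdeal [IsLocalRing A] [IsNoetherianRing A]
    [IsAdicComplete (maximalIdeal A) A] :
    IsAdicComplete ((maximalIdeal A).map (algebraMap A B)) B where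
  toIsHausdorff := IsHausdorff.map_algebraMap_iff.2 inferInstance
  toIsPrecomplete := IsPrecomplete.map_algebraMap_iff.2 (isPrecomplete_of_finite _ _)

theorem isLocalRing_of_finite_of_isAdicComplete [IsLocalRing A] [IsNoetherianRing A]
    [IsAdicComplete (maximalIdeal A) A] [IsDomain B] : IsLocalRing B := by
  have := isAdicComplete_map_maximalIdeal A B
  have : IsArtinianRing (A ⧸ maximalIdeal A) := inferInstanceAs (IsArtinianRing (ResidueField A))
  have : IsArtinianRing (B ⧸ (maximalIdeal A).map (algebraMap A B)) :=
    .of_finite (A ⧸ maximalIdeal A) _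
  exact isLocalRing_of_henselianRing ((maximalIdeal A).map (algebraMap A B))

variable [IsDomain A] [IsDiscreteValuationRing A] [IsDedekindDomain B] [FaithfulSMul A B]

theorem isDiscreteValuationRing_of_finite_of_isAdicComplete
    [IsAdicComplete (maximalIdeal A) A] : IsDiscreteValuationRing B := by
  have := isLocalRing_of_finite_of_isAdicComplete A B
  have hB : ¬IsField B := fun h => IsDiscreteValuationRing.not_isField A
    (isField_of_isIntegral_of_isField (FaithfulSMul.algebraMap_injective A B) h)
  exact ((IsDiscreteValuationRing.TFAE B hB).out 0 2).2 ‹_›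

theorem index_powMonoidHom_two_range_units_of_finite [IsAdicComplete (maximalIdeal A) A]
    [Finite (ResidueField A)] (h2 : (2 : A) ≠ 0) (L : Type*) [Field L] [Algebra B L]
    [IsFractionRing B L] :
    (powMonoidHom 2 : Lˣ →* Lˣ).range.index =
      4 * Nat.card (A ⧸ Ideal.span {(2 : A)}) ^ Module.finrank A B := by
  have := isDiscreteValuationRing_of_finite_of_isAdicComplete A B
  have := isAdicComplete_map_maximalIdeal A B
  have : Finite (A ⧸ maximalIdeal A) := ‹Finite (ResidueField A)›
  have := finite_quotient_map (maximalIdeal A) B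
  have := finite_quotient_span_singleton h2
  have h2map : (Ideal.span {(2 : A)}).map (algebraMap A B) = Ideal.span {(2 : B)} := by
    rw [Ideal.map_span, Set.image_singleton, map_ofNat]
  have : Finite (B ⧸ Ideal.span {(2 : B)}) := h2map ▸ finite_quotient_map _ B
  have h2B : (2 : B) ≠ 0 := by
    rw [← map_ofNat (algebraMap A B) 2]
    exact (map_ne_zero_iff _ (FaithfulSMul.algebraMap_injective A B)).2 h2
  rw [index_powMonoidHom_range_units_fractionRing B L,
    index_powMonoidHom_two_range_units h2B (I := (maximalIdeal A).map (algebraMap A B)),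
    ← h2map, natCard_quotient_map]
  ring

end FiniteExtension

theorem square_classes_card_of_finite_extension_of_Q2_general
    {A K L : Type*} [CommRing A] [IsDomain A] [IsDiscreteValuationRing A]
    [IsAdicComplete (maximalIdeal A) A] [Finite (ResidueField A)]
    [Field K] [Algebra A K] [IsFractionRing A K] (h2 : (2 : K) ≠ 0)
    [Field L] [Algebra K L] [FiniteDimensional K L] [Algebra.IsSeparable K L] :
    Finite (Lˣ ⧸ (powMonoidHom 2 : Lˣ →* Lˣ).range) ∧
      Nat.card (Lˣ ⧸ (powMonoidHom 2 : Lˣ →* Lˣ).range) =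
        4 * Nat.card (A ⧸ Ideal.span {(2 : A)}) ^ Module.finrank K L := by
  let _ : Algebra A L := ((algebraMap K L).comp (algebraMap A K)).toAlgebra
  have : IsScalarTower A K L := .of_algebraMap_eq fun _ => rfl
  have : Module.IsTorsionFree A L := .trans_faithfulSMul A K L
  have : Module.Finite A (integralClosure A L) := IsIntegralClosure.finite A K L _
  have : IsDedekindDomain (integralClosure A L) := IsIntegralClosure.isDedekindDomain A K L _
  have : IsFractionRing (integralClosure A L) L :=
    integralClosure.isFractionRing_of_finite_extension K L
  have h2A : (2 : A) ≠ 0 := fun h => h2 (by rw [← map_ofNat (algebraMap A K), h, map_zero])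
  have := finite_quotient_span_singleton h2A
  have hcard := index_powMonoidHom_two_range_units_of_finite A (integralClosure A L) h2A L
  rw [IsIntegralClosure.rank A K L] at hcard
  have hne : 4 * Nat.card (A ⧸ Ideal.span {(2 : A)}) ^ Module.finrank K L ≠ 0 :=
    mul_ne_zero four_ne_zero (pow_ne_zero _ Nat.card_pos.ne')
  exact ⟨Nat.finite_of_card_ne_zero (hcard.trans_ne hne), hcard⟩

theorem natCard_padicInt_quotient_span_p (p : ℕ) [Fact p.Prime] :
    Nat.card (ℤ_[p] ⧸ Ideal.span {(p : ℤ_[p])}) = p := by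
  rw [← PadicInt.maximalIdeal_eq_span_p]
  exact (Nat.card_congr PadicInt.residueField.toEquiv).trans (Nat.card_zmod p)

/-- **Square classes of a 2-adic field.**
Let `F` be a finite extension of `ℚ₂` of degree `d = [F : ℚ₂]`.  Then the quotient group
`F^× / (F^×)²` of the multiplicative group of `F` by its subgroup of squares is finite of
order `2 ^ (2 + d)`. -/
theorem square_classes_card_of_finite_extension_of_Q2
    (F : Type*) [Field F] [Algebra ℚ_[2] F] [FiniteDimensional ℚ_[2] F]
    (d : ℕ) (hd : d = Module.finrank ℚ_[2] F) :
    Finite (Fˣ ⧸ (powMonoidHom 2 : Fˣ →* Fˣ).range) ∧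
      Nat.card (Fˣ ⧸ (powMonoidHom 2 : Fˣ →* Fˣ).range) = 2 ^ (2 + d) := by
  have : Finite (ResidueField ℤ_[2]) := .of_equiv _ PadicInt.residueField.symm.toEquiv
  have hquot : Nat.card (ℤ_[2] ⧸ Ideal.span {(2 : ℤ_[2])}) = 2 :=
    natCard_padicInt_quotient_span_p 2
  have hpow : 2 ^ (2 + d) = 4 * 2 ^ d := pow_add 2 2 d
  have hgeneral := square_classes_card_of_finite_extension_of_Q2_general
    (A := ℤ_[2]) (K := ℚ_[2]) (L := F) two_ne_zero
  rwa [hquot, ← hd, ← hpow] at hgeneral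
end

section
/- Let F be a finite extension of ℚ₂ with ring of integers O_F, and let E|F be a quadratic field extension with ring of integers O_E which is ramified, i.e. π₀·O_E = m_E² where π₀ is a uniformizer of O_F and m_E is the maximal ideal of O_E. Then there exist a uniformizer Π of O_E and elements π₀, t ∈ O_F with π₀ a uniformizer of O_F, such that O_E = O_F[Π] (O_E is generated as an O_F-algebra by Π) and either (type R-P) Π² + π₀ = 0, or (type R-U) Π² − t·Π + π₀ = 0 where π₀ ∣ t and t ∣ 2 in O_F. -/
set_option synthInstance.maxHeartbeats 1000000
set_option maxHeartbeats 2000000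

/-!
Since `π₀ O_E = m_E²`, the ideal `m_E` is invertible, hence principal, and a generator `ϖ` satisfies
`ϖ² ~ π₀`. An element of `O_F` divisible by `ϖ` is divisible by `π₀`, so `π₀ ∣ x + y ϖ` forces
`π₀ ∣ x` and `π₀ ∣ y`; as `O_E` has rank two over `O_F`, this makes `1, ϖ` a basis of it. The
resulting equation `ϖ² - t ϖ + n = 0` is Eisenstein, i.e. `n` is a uniformizer dividing `t`. If `t`
does not divide `2`, then `t = 2 s` with `s` a nonunit, and completing the square gives
`(ϖ - s)² + (n - s²) = 0`, where `ϖ - s` and `n - s²` are again uniformizers.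
-/

section PadicRigidity

open IsLocalRing

theorem exists_pow_eq_of_sub_one_mem {R : Type*} [CommRing R] {I : Ideal R} [HenselianRing R I]
    {n : ℕ} (hn : IsUnit (n : R)) {x : R} (hx : x - 1 ∈ I) : ∃ z, z ^ n = x := by
  obtain rfl | hn₀ := eq_or_ne n 0
  · have : Subsingleton R := subsingleton_of_zero_eq_one (by simpa using hn)
    exact ⟨0, Subsingleton.elim _ _⟩
  · obtain ⟨z, hz, -⟩ := HenselianRing.is_henselian (I := I) (Polynomial.X ^ n - Polynomial.C x)
      (Polynomial.monic_X_pow_sub_C x hn₀) 1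
      (by simpa using neg_mem hx)
      (by simpa [Polynomial.derivative_X_pow] using hn.map (Ideal.Quotient.mk I))
    exact ⟨z, by simpa [sub_eq_zero] using hz⟩

theorem withZero_eq_one_of_frequently_exists_pow_eq {a : WithZero (Multiplicative ℤ)} (ha : a ≠ 0)
    (h : ∃ᶠ n : ℕ in Filter.atTop, ∃ b, b ^ n = a) : a = 1 := by
  obtain ⟨n, hn, b, rfl⟩ := Filter.frequently_atTop'.mp h (WithZero.log a).natAbs
  have hlog : WithZero.log (b ^ n) = 0 := by
    refine Int.eq_zero_of_abs_lt_dvd (m := n) ?_ ?_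
    · simp [WithZero.log_pow]
    · rw [Int.abs_eq_natAbs]
      exact_mod_cast hn
  rw [← WithZero.exp_log ha, hlog, WithZero.exp_zero]

theorem mem_range_algebraMap_of_frequently_exists_pow_eq {R K : Type*} [CommRing R]
    [IsDedekindDomain R] [Field K] [Algebra R K] [IsFractionRing R K] {x : K}
    (h : ∃ᶠ n : ℕ in Filter.atTop, ∃ y, y ^ n = x) : x ∈ (algebraMap R K).range := by
  obtain rfl | hx := eq_or_ne x 0
  · exact zero_mem _
  refine IsDedekindDomain.HeightOneSpectrum.mem_integers_of_valuation_le_one K x fun v => ?_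
  refine (withZero_eq_one_of_frequently_exists_pow_eq
    ((Valuation.ne_zero_iff _).mpr hx) (h.mono ?_)).le
  rintro n ⟨y, rfl⟩
  exact ⟨v.valuation K y, (map_pow _ _ _).symm⟩

variable {p : ℕ} [Fact p.Prime]

theorem padicInt_pow_sub_one_sub_one_mem_maximalIdeal {y : ℤ_[p]} (hy : IsUnit y) :
    y ^ (p - 1) - 1 ∈ maximalIdeal ℤ_[p] := by
  rw [← PadicInt.ker_toZMod, RingHom.mem_ker, map_sub, map_pow, map_one,
    ZMod.pow_card_sub_one_eq_one (hy.map _).ne_zero, sub_self]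

-- By Hensel's lemma `y ^ (p - 1)`, which is `1` modulo `p`, is an `n`-th power for every `n` prime
-- to `p`, so all discrete valuations of its image vanish.
theorem padicInt_ringHom_apply_mem_range_of_isUnit {B K : Type*} [CommRing B]
    [IsDedekindDomain B] [Field K] [Algebra B K] [IsFractionRing B K] (f : ℤ_[p] →+* K)
    {y : ℤ_[p]} (hy : IsUnit y) :
    f y ∈ (algebraMap B K).range := by
  have hp : 1 < p := (Fact.out : p.Prime).one_lt
  have hpow : f (y ^ (p - 1)) ∈ (algebraMap B K).range := by
    refine mem_range_algebraMap_of_frequently_exists_pow_eq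
      (Filter.frequently_atTop'.mpr fun N => ?_)
    have hunit : IsUnit ((p * N + 1 : ℕ) : ℤ_[p]) :=
      PadicInt.isUnit_iff.mpr (PadicInt.norm_natCast_eq_one_iff.mpr (by simp))
    obtain ⟨z, hz⟩ := exists_pow_eq_of_sub_one_mem hunit
      (padicInt_pow_sub_one_sub_one_mem_maximalIdeal hy)
    exact ⟨p * N + 1, by nlinarith, f z, by rw [← map_pow, hz]⟩
  rw [map_pow] at hpow
  exact IsIntegrallyClosed.isIntegral_iff.mp
    (.of_pow (by lia) (IsIntegrallyClosed.isIntegral_iff.mpr hpow))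

theorem padicInt_ringHom_apply_mem_range {B K : Type*} [CommRing B] [IsDedekindDomain B] [Field K]
    [Algebra B K] [IsFractionRing B K] (f : ℤ_[p] →+* K) (y : ℤ_[p]) :
    f y ∈ (algebraMap B K).range := by
  by_cases hy : IsUnit y
  · exact padicInt_ringHom_apply_mem_range_of_isUnit f hy
  · have hsub : f (1 - y) ∈ (algebraMap B K).range :=
      padicInt_ringHom_apply_mem_range_of_isUnit f (isUnit_one_sub_self_of_mem_nonunits y hy)
    simpa using sub_mem (one_mem _) hsub

theorem subsingleton_padicInt_ringHom_of_isHausdorff {R : Type*} [CommRing R]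
    [IsHausdorff (Ideal.span {(p : R)}) R] : Subsingleton (ℤ_[p] →+* R) := by
  have hmk (f : ℤ_[p] →+* R) (n : ℕ) (y : ℤ_[p]) :
      Ideal.Quotient.mk (Ideal.span {(p : R)} ^ n) (f y) = (y.appr n : R ⧸ _) := by
    obtain ⟨c, hc⟩ := Ideal.mem_span_singleton.mp (PadicInt.appr_spec n y)
    rw [← map_natCast (Ideal.Quotient.mk _), Ideal.Quotient.mk_eq_mk_iff_sub_mem,
      Ideal.span_singleton_pow, Ideal.mem_span_singleton]
    exact ⟨f c, by simpa using congrArg f hc⟩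
  exact ⟨fun f g => RingHom.coe_inj <| IsHausdorff.funext' (Ideal.span {(p : R)}) fun n y =>
    (hmk f n y).trans (hmk g n y).symm⟩

theorem subsingleton_padicInt_ringHom (E : Type*) [Field E] [Algebra ℚ_[p] E]
    [FiniteDimensional ℚ_[p] E] : Subsingleton (ℤ_[p] →+* E) := by
  let _ : Algebra ℤ_[p] E := ((algebraMap ℚ_[p] E).comp (algebraMap ℤ_[p] ℚ_[p])).toAlgebra
  have : IsScalarTower ℤ_[p] ℚ_[p] E := .of_algebraMap_eq fun _ => rfl
  let B := integralClosure ℤ_[p] E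
  have : IsDedekindDomain B := integralClosure.isDedekindDomain ℤ_[p] ℚ_[p] E
  have : IsFractionRing B E := integralClosure.isFractionRing_of_finite_extension ℚ_[p] E
  have : FaithfulSMul ℤ_[p] E := .trans ℤ_[p] ℚ_[p] E
  have hpB : ¬IsUnit (p : B) := fun h =>
    PadicInt.p_nonunit (isUnit_of_map_unit (algebraMap ℤ_[p] B) _ (by simpa using h))
  have : IsHausdorff (Ideal.span {(p : B)}) B :=
    .of_isDomain _ (by rwa [Ne, Ideal.span_singleton_eq_top])
  have hsub : Subsingleton (ℤ_[p] →+* B) := subsingleton_padicInt_ringHom_of_isHausdorff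
  have hmem (f : ℤ_[p] →+* E) (y : ℤ_[p]) : f y ∈ B := by
    obtain ⟨b, hb⟩ := padicInt_ringHom_apply_mem_range (B := B) f y
    exact hb ▸ b.2
  refine ⟨fun f g => RingHom.ext fun y => ?_⟩
  exact congrArg Subtype.val (RingHom.congr_fun
    (hsub.elim (f.codRestrict B (hmem f)) (g.codRestrict B (hmem g))) y)

end PadicRigidity

section IntegralClosure

theorem isDiscreteValuationRing_integralClosure (R K L : Type*) [CommRing R] [IsDomain R]
    [IsDiscreteValuationRing R] [Field K] [Algebra R K] [IsFractionRing R K] [Field L]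
    [Algebra K L] [Algebra R L] [IsScalarTower R K L] [FiniteDimensional K L]
    [Algebra.IsSeparable K L] [IsLocalRing (integralClosure R L)] :
    IsDiscreteValuationRing (integralClosure R L) := by
  have : IsDedekindDomain (integralClosure R L) := integralClosure.isDedekindDomain R K L
  have : FaithfulSMul R L := .trans R K L
  have hfield : ¬IsField (integralClosure R L) := fun h =>
    IsDiscreteValuationRing.not_isField R
      (isField_of_isIntegral_of_isField (FaithfulSMul.algebraMap_injective R _) h)
  exact ((IsDiscreteValuationRing.TFAE _ hfield).out 0 2).mpr ‹IsDedekindDomain _›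

theorem finrank_integralClosure_eq_finrank (R K A F E : Type*) [CommRing R] [IsDomain R]
    [Field K] [Algebra R K] [IsFractionRing R K] [CommRing A] [IsDomain A] [Algebra R A]
    [Algebra.IsIntegral R A] [Field F] [Algebra K F] [FiniteDimensional K F] [Algebra R F]
    [IsScalarTower R K F] [Algebra A F] [IsFractionRing A F] [IsScalarTower R A F] [Field E]
    [Algebra F E] [FiniteDimensional F E] [Algebra K E] [IsScalarTower K F E] [Algebra R E]
    [IsScalarTower R K E] [Algebra A E] [IsScalarTower R A E] :
    Module.finrank A (integralClosure A E) = Module.finrank F E := by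
  have : FiniteDimensional K E := .trans K F E
  have : FaithfulSMul R E := .trans R K E
  have hker : RingHom.ker (algebraMap A E) = ⊥ := by
    refine Ideal.eq_bot_of_comap_eq_bot (R := R) ?_
    rw [RingHom.comap_ker, ← IsScalarTower.algebraMap_eq]
    exact (RingHom.injective_iff_ker_eq_bot _).mp (FaithfulSMul.algebraMap_injective R E)
  have hinj : Function.Injective (algebraMap A E) := (RingHom.injective_iff_ker_eq_bot _).mpr hker
  have : FaithfulSMul A E := (faithfulSMul_iff_algebraMap_injective A E).mpr hinj
  have : Algebra.IsAlgebraic R E :=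
    (IsFractionRing.comap_isAlgebraic_iff (K := K)).mpr inferInstance
  have : FaithfulSMul R A := .tower_bot R A E
  have : Algebra.IsAlgebraic A E := .extendScalars (FaithfulSMul.algebraMap_injective R A)
  have : IsFractionRing (integralClosure A E) E :=
    integralClosure.isFractionRing_of_algebraic ((injective_iff_map_eq_zero _).mp hinj)
  refine Nat.eq_of_mul_eq_mul_left (Module.finrank_pos (R := K) (M := F)) ?_
  rw [Module.finrank_mul_finrank, IsFractionRing.finrank_eq R K A F,
    Module.finrank_mul_finrank', ← IsFractionRing.finrank_eq R K (integralClosure A E) E]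

/- Pitfall: besides the given `A`-algebra structure, `E` carries the action of `A` through `F` when
`A` is the subalgebra `integralClosure ℤ_[p] F`, and the two need not agree. They do agree on
`ℤ_[p]`, which has only one ring homomorphism to `E`, and this suffices to compare ranks. -/
theorem padicInt_finrank_integralClosure_eq_finrank (p : ℕ) [Fact p.Prime] (A F E : Type*)
    [Field F] [Algebra ℚ_[p] F] [FiniteDimensional ℚ_[p] F] [Algebra ℤ_[p] F]
    [IsScalarTower ℤ_[p] ℚ_[p] F] [CommRing A] [IsDomain A] [Algebra ℤ_[p] A] [Algebra A F]
    [IsScalarTower ℤ_[p] A F] [IsIntegralClosure A ℤ_[p] F] [Field E] [Algebra F E]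
    [FiniteDimensional F E] [Algebra A E] :
    Module.finrank A (integralClosure A E) = Module.finrank F E := by
  let _ : Algebra ℚ_[p] E := ((algebraMap F E).comp (algebraMap ℚ_[p] F)).toAlgebra
  have : IsScalarTower ℚ_[p] F E := .of_algebraMap_eq fun _ => rfl
  have : FiniteDimensional ℚ_[p] E := .trans ℚ_[p] F E
  let _ : Algebra ℤ_[p] E := ((algebraMap ℚ_[p] E).comp (algebraMap ℤ_[p] ℚ_[p])).toAlgebra
  have : IsScalarTower ℤ_[p] ℚ_[p] E := .of_algebraMap_eq fun _ => rfl
  have : IsScalarTower ℤ_[p] A E := .of_algebraMap_eq' ((subsingleton_padicInt_ringHom E).elim _ _)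
  have : IsFractionRing A F := IsIntegralClosure.isFractionRing_of_finite_extension ℤ_[p] ℚ_[p] F A
  have : Algebra.IsIntegral ℤ_[p] A := IsIntegralClosure.isIntegral_algebra ℤ_[p] F
  exact finrank_integralClosure_eq_finrank ℤ_[p] ℚ_[p] A F E

end IntegralClosure

section EisensteinExtension

open IsLocalRing

theorem exists_associated_sq_of_span_singleton_eq_maximalIdeal_sq {R : Type*} [CommRing R]
    [IsDomain R] [IsLocalRing R] {r : R} (hr : r ≠ 0)
    (h : Ideal.span {r} = maximalIdeal R ^ 2) :
    ∃ ϖ : R, maximalIdeal R = Ideal.span {ϖ} ∧ Associated r (ϖ ^ 2) := by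
  have hunit : IsUnit (maximalIdeal R : FractionalIdeal (nonZeroDivisors R) (FractionRing R)) := by
    refine (isUnit_pow_iff two_ne_zero).mp ?_
    rw [← FractionalIdeal.coeIdeal_pow, ← h, FractionalIdeal.coeIdeal_span_singleton]
    exact .of_mul_eq_one _ (FractionalIdeal.spanSingleton_mul_inv _ (by simpa using hr))
  obtain ⟨⟨ϖ, hϖ⟩⟩ := Ideal.IsPrincipal.of_finite_maximals_of_isUnit
    ((Set.finite_singleton (maximalIdeal R)).subset fun _ => eq_maximalIdeal) hunit
  rw [Ideal.submodule_span_eq] at hϖ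
  refine ⟨ϖ, hϖ, ?_⟩
  rwa [hϖ, Ideal.span_singleton_pow, Ideal.span_singleton_eq_span_singleton] at h

theorem maximalIdeal_eq_span_singleton_sub {R : Type*} [CommRing R] [IsLocalRing R] {x y : R}
    (hx : maximalIdeal R = Ideal.span {x}) (hxy : x ^ 2 ∣ y) :
    maximalIdeal R = Ideal.span {x - y} := by
  obtain ⟨c, rfl⟩ := hxy
  have hxc : x * c ∈ maximalIdeal R := hx ▸ Ideal.mem_span_singleton.mpr (dvd_mul_right x c)
  have hunit : IsUnit (1 - x * c) := isUnit_one_sub_self_of_mem_nonunits _ hxc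
  rw [hx, ← Ideal.span_singleton_mul_right_unit hunit]
  congr 2
  ring

variable {A B : Type*} [CommRing A] [CommRing B] [Algebra A B] {π : A} {ϖ : B}

theorem dvd_of_dvd_algebraMap [IsLocalRing A] (hπ : maximalIdeal A = Ideal.span {π})
    (hϖ : ¬IsUnit ϖ) {a : A} (h : ϖ ∣ algebraMap A B a) : π ∣ a := by
  rw [← Ideal.mem_span_singleton, ← hπ]
  exact fun ha => hϖ (isUnit_of_dvd_unit h (ha.map _))

theorem dvd_and_dvd_of_sq_dvd_add_mul [IsLocalRing A] [IsDomain B]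
    (hπ : maximalIdeal A = Ideal.span {π}) (hϖ : ¬IsUnit ϖ) (hϖ₀ : ϖ ≠ 0)
    (hram : ϖ ^ 2 ∣ algebraMap A B π) {x y : A}
    (h : ϖ ^ 2 ∣ algebraMap A B x + algebraMap A B y * ϖ) : π ∣ x ∧ π ∣ y := by
  have hx : π ∣ x := dvd_of_dvd_algebraMap hπ hϖ <|
    (dvd_add_left (dvd_mul_left ϖ _)).mp ((dvd_pow_self ϖ two_ne_zero).trans h)
  have hy : ϖ ^ 2 ∣ algebraMap A B y * ϖ :=
    (dvd_add_right (hram.trans (map_dvd _ hx))).mp h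
  rw [sq] at hy
  exact ⟨hx, dvd_of_dvd_algebraMap hπ hϖ ((mul_dvd_mul_iff_right hϖ₀).mp hy)⟩

theorem pow_dvd_and_pow_dvd_of_algebraMap_pow_dvd_add_mul [IsLocalRing A] [IsDomain B]
    (hπ : maximalIdeal A = Ideal.span {π}) (hϖ : ¬IsUnit ϖ) (hπ₀ : algebraMap A B π ≠ 0)
    (hram : ϖ ^ 2 ∣ algebraMap A B π) {k : ℕ} {x y : A}
    (h : algebraMap A B π ^ k ∣ algebraMap A B x + algebraMap A B y * ϖ) :
    π ^ k ∣ x ∧ π ^ k ∣ y := by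
  have hϖ₀ : ϖ ≠ 0 := (pow_ne_zero_iff two_ne_zero).mp (ne_zero_of_dvd_ne_zero hπ₀ hram)
  induction k generalizing x y with
  | zero => simp
  | succ k ih =>
    obtain ⟨⟨x, rfl⟩, ⟨y, rfl⟩⟩ := dvd_and_dvd_of_sq_dvd_add_mul hπ hϖ hϖ₀ hram
      ((hram.trans (dvd_pow_self _ k.succ_ne_zero)).trans h)
    rw [map_mul, map_mul, mul_assoc, ← mul_add, pow_succ', mul_dvd_mul_iff_left hπ₀] at h
    rw [pow_succ']
    exact (ih h).imp (mul_dvd_mul_left π) (mul_dvd_mul_left π)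

theorem dvd_and_dvd_of_algebraMap_dvd_add_mul [IsDomain A] [IsDiscreteValuationRing A] [IsDomain B]
    [FaithfulSMul A B] (hπ : maximalIdeal A = Ideal.span {π}) (hϖ : ¬IsUnit ϖ)
    (hram : ϖ ^ 2 ∣ algebraMap A B π) {a x y : A} (ha : a ≠ 0)
    (h : algebraMap A B a ∣ algebraMap A B x + algebraMap A B y * ϖ) : a ∣ x ∧ a ∣ y := by
  have hirr : Irreducible π := (IsDiscreteValuationRing.irreducible_iff_uniformizer π).mpr hπ
  obtain ⟨k, u, rfl⟩ := IsDiscreteValuationRing.eq_unit_mul_pow_irreducible ha hirr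
  rw [map_mul, (u.isUnit.map (algebraMap A B)).mul_left_dvd, map_pow] at h
  simp only [u.isUnit.mul_left_dvd]
  exact pow_dvd_and_pow_dvd_of_algebraMap_pow_dvd_add_mul hπ hϖ (by simpa using hirr.ne_zero)
    hram h

theorem eq_zero_and_eq_zero_of_add_mul_eq_zero [IsDomain A] [IsDiscreteValuationRing A]
    [IsDomain B] [FaithfulSMul A B] (hπ : maximalIdeal A = Ideal.span {π}) (hϖ : ¬IsUnit ϖ)
    (hram : ϖ ^ 2 ∣ algebraMap A B π) {x y : A}
    (h : algebraMap A B x + algebraMap A B y * ϖ = 0) : x = 0 ∧ y = 0 := by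
  have hirr : Irreducible π := (IsDiscreteValuationRing.irreducible_iff_uniformizer π).mpr hπ
  have hdvd {a : A} (ha : a ≠ 0) : a ∣ x ∧ a ∣ y :=
    dvd_and_dvd_of_algebraMap_dvd_add_mul hπ hϖ hram ha (h ▸ dvd_zero _)
  have hnot {a : A} (ha : a ≠ 0) : ¬π * a ∣ a := fun hda =>
    hirr.not_isUnit (isUnit_of_dvd_one ((mul_dvd_mul_iff_right ha).mp (by simpa using hda)))
  constructor <;> by_contra h₀
  · exact hnot h₀ (hdvd (mul_ne_zero hirr.ne_zero h₀)).1
  · exact hnot h₀ (hdvd (mul_ne_zero hirr.ne_zero h₀)).2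

theorem exists_eq_add_mul_of_finrank_eq_two [IsDomain A] [IsDiscreteValuationRing A]
    [IsDomain B] [FaithfulSMul A B] (hrank : Module.finrank A B = 2)
    (hπ : maximalIdeal A = Ideal.span {π}) (hϖ : ¬IsUnit ϖ)
    (hram : ϖ ^ 2 ∣ algebraMap A B π) (b : B) :
    ∃ x y : A, b = algebraMap A B x + algebraMap A B y * ϖ := by
  have hdep : ¬LinearIndependent A ![1, ϖ, b] := fun hli => by
    have hle := hli.cardinal_lift_le_rank
    rw [(Module.rank_eq_ofNat_iff_finrank_eq_ofNat 2).mpr hrank, Cardinal.mk_fin,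
      Cardinal.lift_natCast, Cardinal.lift_ofNat] at hle
    exact absurd hle (by norm_num)
  obtain ⟨g, hg, hg₀⟩ := Fintype.not_linearIndependent_iff.mp hdep
  replace hg : algebraMap A B (g 0) + algebraMap A B (g 1) * ϖ + algebraMap A B (g 2) * b = 0 := by
    simpa [Fin.sum_univ_three, Algebra.smul_def] using hg
  have hg₂ : g 2 ≠ 0 := fun h₂ => by
    obtain ⟨h₀, h₁⟩ := eq_zero_and_eq_zero_of_add_mul_eq_zero hπ hϖ hram
      (by simpa [h₂] using hg)
    obtain ⟨i, hi⟩ := hg₀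
    fin_cases i <;> contradiction
  obtain ⟨⟨x, hx⟩, ⟨y, hy⟩⟩ := dvd_and_dvd_of_algebraMap_dvd_add_mul hπ hϖ hram hg₂
    (x := g 0) (y := g 1) ⟨-b, by linear_combination hg⟩
  refine ⟨-x, -y, mul_left_cancel₀ (a := algebraMap A B (g 2)) (by simpa using hg₂) ?_⟩
  rw [hx, hy] at hg
  simp only [map_mul, map_neg] at hg ⊢
  linear_combination hg

theorem maximalIdeal_eq_span_singleton_and_dvd_of_quadratic [IsLocalRing A] [IsDomain B]
    (hπ : maximalIdeal A = Ideal.span {π}) (hϖ : ¬IsUnit ϖ) (hϖ₀ : ϖ ≠ 0)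
    (hram : Associated (algebraMap A B π) (ϖ ^ 2)) {t n : A}
    (h : ϖ ^ 2 - algebraMap A B t * ϖ + algebraMap A B n = 0) :
    maximalIdeal A = Ideal.span {n} ∧ n ∣ t := by
  obtain ⟨⟨u, rfl⟩, ht⟩ := dvd_and_dvd_of_sq_dvd_add_mul hπ hϖ hϖ₀ hram.dvd'
    (x := n) (y := -t) ⟨-1, by rw [map_neg]; linear_combination h⟩
  obtain ⟨s, rfl⟩ := (dvd_neg.mp ht : π ∣ t)
  obtain ⟨e, he⟩ := hram
  have hπB : algebraMap A B π ≠ 0 := left_ne_zero_of_mul (he ▸ pow_ne_zero 2 hϖ₀)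
  have he' : (e : B) = algebraMap A B s * ϖ - algebraMap A B u := by
    refine mul_left_cancel₀ hπB ?_
    simp only [map_mul] at h
    linear_combination he + h
  have hu : IsUnit u := by
    by_contra hu
    have hπu : π ∣ u := Ideal.mem_span_singleton.mp (hπ ▸ hu)
    have hϖu : ϖ ∣ algebraMap A B u :=
      ((dvd_pow_self ϖ two_ne_zero).trans (Associated.dvd' ⟨e, he⟩)).trans (map_dvd _ hπu)
    exact hϖ (isUnit_of_dvd_unit (he' ▸ dvd_sub (dvd_mul_left ϖ _) hϖu) e.isUnit)
  exact ⟨by rw [hπ, Ideal.span_singleton_mul_right_unit hu], mul_dvd_mul_left π hu.dvd⟩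

theorem adjoin_singleton_eq_top (h : ∀ b : B, ∃ x y : A,
    b = algebraMap A B x + algebraMap A B y * ϖ) : Algebra.adjoin A {ϖ} = ⊤ := by
  refine eq_top_iff.mpr fun b _ => ?_
  obtain ⟨x, y, rfl⟩ := h b
  exact add_mem (algebraMap_mem _ x)
    (mul_mem (algebraMap_mem _ y) (Algebra.self_mem_adjoin_singleton A ϖ))

theorem exists_uniformizer_quadratic_eq_zero [IsDomain A] [IsDiscreteValuationRing A]
    [IsDomain B] [IsLocalRing B] (hrank : Module.finrank A B = 2)
    (hπ : maximalIdeal A = Ideal.span {π})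
    (hram : Ideal.span {algebraMap A B π} = maximalIdeal B ^ 2) :
    ∃ (ϖ : B) (n t : A), maximalIdeal A = Ideal.span {n} ∧ maximalIdeal B = Ideal.span {ϖ} ∧
      (∀ b : B, ∃ x y : A, b = algebraMap A B x + algebraMap A B y * ϖ) ∧
      ϖ ^ 2 - algebraMap A B t * ϖ + algebraMap A B n = 0 ∧ n ∣ t := by
  have : FaithfulSMul A B := by
    by_contra hfaithful
    exact two_ne_zero (hrank.symm.trans (Module.finrank_eq_zero_of_not_faithfulSMul hfaithful))
  have hπB : algebraMap A B π ≠ 0 := by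
    simpa using ((IsDiscreteValuationRing.irreducible_iff_uniformizer π).mpr hπ).ne_zero
  obtain ⟨ϖ, hϖ, hassoc⟩ := exists_associated_sq_of_span_singleton_eq_maximalIdeal_sq hπB hram
  have hϖ₁ : ¬IsUnit ϖ := by
    rw [← mem_nonunits_iff, ← mem_maximalIdeal, hϖ]
    exact Ideal.mem_span_singleton_self ϖ
  have hϖ₀ : ϖ ≠ 0 := (pow_ne_zero_iff two_ne_zero).mp (hassoc.ne_zero_iff.mp hπB)
  have hbasis := exists_eq_add_mul_of_finrank_eq_two hrank hπ hϖ₁ hassoc.dvd'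
  obtain ⟨x, t, hxt⟩ := hbasis (ϖ ^ 2)
  have heq : ϖ ^ 2 - algebraMap A B t * ϖ + algebraMap A B (-x) = 0 := by
    rw [map_neg]
    linear_combination hxt
  obtain ⟨hn, hnt⟩ :=
    maximalIdeal_eq_span_singleton_and_dvd_of_quadratic hπ hϖ₁ hϖ₀ hassoc heq
  exact ⟨ϖ, -x, t, hn, hϖ, hbasis, heq, hnt⟩

theorem ramified_quadratic_RP_or_RU_general {A B : Type*} [CommRing A] [IsDomain A]
    [IsDiscreteValuationRing A] [CommRing B] [IsDomain B] [IsLocalRing B] [Algebra A B]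
    (hrank : Module.finrank A B = 2) {π₀ : A} (hπ₀ : maximalIdeal A = Ideal.span {π₀})
    (hram : Ideal.span {algebraMap A B π₀} = maximalIdeal B ^ 2) :
    ∃ (ϖ : B) (π₀' t : A), maximalIdeal A = Ideal.span {π₀'} ∧
      maximalIdeal B = Ideal.span {ϖ} ∧ Algebra.adjoin A {ϖ} = ⊤ ∧
      (ϖ ^ 2 + algebraMap A B π₀' = 0 ∨
        (ϖ ^ 2 - algebraMap A B t * ϖ + algebraMap A B π₀' = 0 ∧ π₀' ∣ t ∧ t ∣ 2)) := by
  obtain ⟨ϖ, n, t, hn, hϖ, hbasis, heq, hnt⟩ :=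
    exists_uniformizer_quadratic_eq_zero hrank hπ₀ hram
  by_cases ht : t ∣ 2
  · exact ⟨ϖ, n, t, hn, hϖ, adjoin_singleton_eq_top hbasis, .inr ⟨heq, hnt, ht⟩⟩
  obtain ⟨s, rfl⟩ := (ValuationRing.dvd_total t 2).resolve_left ht
  have hns : n ∣ s := by
    rw [← Ideal.mem_span_singleton, ← hn, mem_maximalIdeal, mem_nonunits_iff]
    exact fun hs => ht (hs.mul_right_dvd.mpr dvd_rfl)
  have hϖn : ϖ ^ 2 ∣ algebraMap A B n := by
    rw [← Ideal.mem_span_singleton, ← Ideal.span_singleton_pow, ← hϖ, ← hram,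
      Ideal.mem_span_singleton]
    exact map_dvd _ (Ideal.mem_span_singleton.mp (hπ₀ ▸ hn ▸ Ideal.mem_span_singleton_self n))
  refine ⟨ϖ - algebraMap A B s, n - s ^ 2, 0,
    maximalIdeal_eq_span_singleton_sub hn (pow_dvd_pow_of_dvd hns 2),
    maximalIdeal_eq_span_singleton_sub hϖ (hϖn.trans (map_dvd _ hns)),
    adjoin_singleton_eq_top fun b => ?_, .inl ?_⟩
  · obtain ⟨x, y, rfl⟩ := hbasis b
    exact ⟨x + y * s, y, by rw [map_add, map_mul]; ring⟩
  · simp only [map_sub, map_mul, map_pow, map_ofNat] at heq ⊢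
    linear_combination heq

end EisensteinExtension

/-- **Classification of ramified quadratic extensions of a 2-adic field (R-P / R-U).**
Let `F` be a finite extension of `ℚ₂` with ring of integers `O_F` (the integral closure of
`ℤ₂` in `F`), and let `E|F` be a quadratic field extension with ring of integers `O_E`
(the integral closure of `O_F` in `E`) which is ramified, i.e. `π₀·O_E = m_E²` for a
uniformizer `π₀` of `O_F`, where `m_E` is the maximal ideal of `O_E`.  Then there exist a
uniformizer `Π` (written `ϖ` below) of `O_E` and elements `π₀', t ∈ O_F` with `π₀'` a
uniformizer of `O_F`, such that `O_E = O_F[Π]` and either (type R-P) `Π² + π₀' = 0`, or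
(type R-U) `Π² − t·Π + π₀' = 0` where `π₀' ∣ t` and `t ∣ 2` in `O_F`. -/
theorem ramified_quadratic_RP_or_RU
    (F : Type*) [Field F] [Algebra ℚ_[2] F] [FiniteDimensional ℚ_[2] F]
    [Algebra ℤ_[2] F] [IsScalarTower ℤ_[2] ℚ_[2] F]
    [IsLocalRing (integralClosure ℤ_[2] F)]
    (π₀ : integralClosure ℤ_[2] F)
    (hπ₀ : IsLocalRing.maximalIdeal (integralClosure ℤ_[2] F) = Ideal.span {π₀})
    (E : Type*) [Field E] [Algebra F E] [FiniteDimensional F E]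
    (hdeg : Module.finrank F E = 2)
    [Algebra (integralClosure ℤ_[2] F) E] [IsScalarTower (integralClosure ℤ_[2] F) F E]
    [IsLocalRing (integralClosure (integralClosure ℤ_[2] F) E)]
    (hram : Ideal.span {algebraMap (integralClosure ℤ_[2] F)
        (integralClosure (integralClosure ℤ_[2] F) E) π₀}
      = (IsLocalRing.maximalIdeal (integralClosure (integralClosure ℤ_[2] F) E)) ^ 2) :
    ∃ (ϖ : integralClosure (integralClosure ℤ_[2] F) E) (π₀' t : integralClosure ℤ_[2] F),
      IsLocalRing.maximalIdeal (integralClosure ℤ_[2] F) = Ideal.span {π₀'} ∧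
      IsLocalRing.maximalIdeal (integralClosure (integralClosure ℤ_[2] F) E)
        = Ideal.span {ϖ} ∧
      Algebra.adjoin (integralClosure ℤ_[2] F) {ϖ} = ⊤ ∧
      ((ϖ ^ 2 + algebraMap _ _ π₀' = 0) ∨
        (ϖ ^ 2 - algebraMap _ _ t * ϖ + algebraMap _ _ π₀' = 0 ∧
          π₀' ∣ t ∧ t ∣ 2)) := by
  have : CharZero F := charZero_of_injective_algebraMap (algebraMap ℚ_[2] F).injective
  have : IsDiscreteValuationRing (integralClosure ℤ_[2] F) :=
    isDiscreteValuationRing_integralClosure ℤ_[2] ℚ_[2] F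
  have hrank := (padicInt_finrank_integralClosure_eq_finrank 2 (integralClosure ℤ_[2] F) F E).trans
    hdeg
  exact ramified_quadratic_RP_or_RU_general hrank hπ₀ hram
end

section
/- Let t, π₀ ∈ O_F with π₀ a uniformizer, π₀ ∣ t and t ∣ 2 (data of an (R-U) extension), let B be a quaternion division algebra over F, and let ϑ ∈ B satisfy ϑ² = (1 − 4π₀/t²)·1 (note 1 − 4π₀/t² ∈ O_F^×). Let u ∈ O_F^× be a unit such that X² − X − u has no root modulo π₀. Then there exists ϑ̃ ∈ B with ϑ·ϑ̃ = −ϑ̃·ϑ and ϑ̃² = (1 + (t²/π₀)·u)·1; moreover, for any such ϑ̃ the element γ = (1 + ϑ + ϑ̃ + ϑ·ϑ̃)/2 ∈ B satisfies γ² − γ = u·1, so that conjugation data for an unramified quadratic subfield of B is obtained. -/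
set_option synthInstance.maxHeartbeats 1000000
set_option maxHeartbeats 2000000

/-!
Write `t = π₀ τ` and let `K = F[ω]` be the quadratic extension with `ω² = -π₀ + t ω`, so that
`ϑ = 1 - 2 ω / t` generates `K` inside `B`. An element `j` of `B` anticommutes with `ϑ` exactly when
conjugation by it induces the involution of `K`, and such a nonzero `j` exists because `K` is not
central. Its square `d` lies in `F`, and multiplying `j` by `w ∈ K` multiplies `d` by the norm of
`w`. Now `d` is not a norm: otherwise some `w * j` would have square `1`, hence be `±1` in the
division ring `B`, and could not anticommute with `ϑ`. So it remains to see that `d * b` is a norm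
for `b = 1 + π₀ τ² u = 1 + (t² / π₀) u`, i.e. that every `d ∈ Fˣ` satisfies `d ∈ N(Kˣ)` or
`d * b ∈ N(Kˣ)`.

The uniformizer `π₀` is the norm of `ω`, and a unit can be corrected by norms, one power of `π₀` at
a time, until it is congruent to `1` modulo `π₀ τ²`. Since the norm of `1 - τ y ω` is
`1 + π₀ τ² (y² - y)`, the question becomes solving `y² - y = s`. By Hensel's lemma this is
decided in the residue field, where the values of `y² - y` form an additive subgroup of index two
that does not contain the class of `u`.
-/

open IsLocalRing Polynomial

section CompactRings

theorem isPrecomplete_of_compactSpace {R : Type*} [CommRing R] [IsNoetherianRing R]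
    [TopologicalSpace R] [IsTopologicalRing R] [CompactSpace R] [T2Space R] (I : Ideal R) :
    IsPrecomplete I R := by
  refine ⟨fun f hf => ?_⟩
  simp only [smul_eq_mul, Ideal.mul_top, SModEq.sub_mem] at hf ⊢
  have hclosed (n : ℕ) : IsClosed {x : R | f n - x ∈ I ^ n} :=
    (IsNoetherianRing.isClosed_ideal (I ^ n)).preimage
      (by fun_prop : Continuous fun x : R => f n - x)
  have hanti (n : ℕ) : {x : R | f (n + 1) - x ∈ I ^ (n + 1)} ⊆ {x : R | f n - x ∈ I ^ n} := by
    intro x hx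
    have := add_mem (hf n.le_succ) (Ideal.pow_le_pow_right n.le_succ hx)
    rwa [sub_add_sub_cancel] at this
  obtain ⟨L, hL⟩ := IsCompact.nonempty_iInter_of_sequence_nonempty_isCompact_isClosed _ hanti
    (fun n => ⟨f n, by simp⟩) (hclosed 0).isCompact hclosed
  exact ⟨L, Set.mem_iInter.mp hL⟩

theorem henselianLocalRing_of_compactSpace (R : Type*) [CommRing R] [IsLocalRing R]
    [IsNoetherianRing R] [TopologicalSpace R] [IsTopologicalRing R] [CompactSpace R] [T2Space R] :
    HenselianLocalRing R :=
  have := isPrecomplete_of_compactSpace (maximalIdeal R)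
  have : IsAdicComplete (maximalIdeal R) R := {}
  ⟨fun f hf a h₁ h₂ => HenselianRing.is_henselian f hf a h₁ (h₂.map _)⟩

variable (A : Type*) [CommRing A] [TopologicalSpace A] [IsTopologicalRing A]

theorem compactSpace_of_isModuleTopology [CompactSpace A] (M : Type*) [AddCommGroup M] [Module A M]
    [Module.Finite A M] [TopologicalSpace M] [IsModuleTopology A M] : CompactSpace M := by
  have := IsModuleTopology.toContinuousAdd A M
  obtain ⟨n, f, hf⟩ := Module.Finite.exists_fin' A M
  exact hf.compactSpace (IsModuleTopology.continuous_of_linearMap f)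

theorem t2Space_of_isModuleTopology [T2Space A] (M : Type*) [AddCommGroup M] [Module A M]
    [Module.Free A M] [Module.Finite A M] [TopologicalSpace M] [IsModuleTopology A M] : T2Space M :=
  let e := (Module.Free.chooseBasis A M).equivFun
  .of_injective_continuous e.injective (IsModuleTopology.continuous_of_linearMap e.toLinearMap)

theorem henselianLocalRing_of_finite_of_free [CompactSpace A] [T2Space A] [IsNoetherianRing A]
    (R : Type*) [CommRing R] [IsLocalRing R] [Algebra A R] [Module.Finite A R] [Module.Free A R] :
    HenselianLocalRing R := by
  let : TopologicalSpace R := moduleTopology A R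
  have : IsModuleTopology A R := ⟨rfl⟩
  have := IsModuleTopology.isTopologicalRing A R
  have := compactSpace_of_isModuleTopology A R
  have := t2Space_of_isModuleTopology A R
  have := IsNoetherianRing.of_finite A R
  exact henselianLocalRing_of_compactSpace R

end CompactRings

section PadicIntegers

variable (p : ℕ) [Fact p.Prime] (F : Type*) [Field F] [Algebra ℚ_[p] F]
  [FiniteDimensional ℚ_[p] F] [Algebra ℤ_[p] F] [IsScalarTower ℤ_[p] ℚ_[p] F]

theorem isFractionRing_integralClosure_padicInt :
    IsFractionRing (integralClosure ℤ_[p] F) F :=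
  IsIntegralClosure.isFractionRing_of_finite_extension ℤ_[p] ℚ_[p] F _

theorem finite_integralClosure_padicInt : Module.Finite ℤ_[p] (integralClosure ℤ_[p] F) :=
  have : CharZero F := charZero_of_injective_algebraMap (algebraMap ℚ_[p] F).injective
  IsIntegralClosure.finite ℤ_[p] ℚ_[p] F _

variable [IsLocalRing (integralClosure ℤ_[p] F)]

theorem isDiscreteValuationRing_integralClosure_padicInt :
    IsDiscreteValuationRing (integralClosure ℤ_[p] F) := by
  have : CharZero F := charZero_of_injective_algebraMap (algebraMap ℚ_[p] F).injective
  have : IsDedekindDomain (integralClosure ℤ_[p] F) :=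
    integralClosure.isDedekindDomain ℤ_[p] ℚ_[p] F
  have : FaithfulSMul ℤ_[p] F := .trans ℤ_[p] ℚ_[p] F
  have hfield : ¬ IsField (integralClosure ℤ_[p] F) := fun h =>
    IsDiscreteValuationRing.not_isField ℤ_[p]
      (isField_of_isIntegral_of_isField (FaithfulSMul.algebraMap_injective _ _) h)
  exact { not_a_field' := isField_iff_maximalIdeal_eq.not.mp hfield }

theorem finite_residueField_integralClosure_padicInt :
    Finite (ResidueField (integralClosure ℤ_[p] F)) :=
  have : FaithfulSMul ℤ_[p] F := .trans ℤ_[p] ℚ_[p] F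
  have := finite_integralClosure_padicInt p F
  ResidueField.finite_of_finite (R := ℤ_[p]) inferInstance

theorem henselianLocalRing_integralClosure_padicInt :
    HenselianLocalRing (integralClosure ℤ_[p] F) :=
  have : CharZero F := charZero_of_injective_algebraMap (algebraMap ℚ_[p] F).injective
  have : FaithfulSMul ℤ_[p] F := .trans ℤ_[p] ℚ_[p] F
  have := finite_integralClosure_padicInt p F
  have : Module.Free ℤ_[p] (integralClosure ℤ_[p] F) :=
    IsIntegralClosure.module_free ℤ_[p] ℚ_[p] F _
  henselianLocalRing_of_finite_of_free ℤ_[p] _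

end PadicIntegers

section ArtinSchreier

variable (k : Type*) [Field k] [Finite k]

theorem index_range_frobenius_sub_id (p : ℕ) [Fact p.Prime] [CharP k p] :
    ((frobenius k p : k →+ k) - AddMonoidHom.id k).range.index = p := by
  have hker : (((frobenius k p : k →+ k) - AddMonoidHom.id k).ker : Set k) =
      (⊥ : Subfield k) := by
    ext x
    simp [Subfield.mem_bot_iff_pow_eq_self k p, frobenius_def, sub_eq_zero]
  rw [AddSubgroup.index_range, ← SetLike.coe_sort_coe, hker]
  exact Subfield.card_bot k p

theorem exists_sq_sub_eq_or_add [CharP k 2] {u : k} (hu : ∀ y, y ^ 2 - y ≠ u) (s : k) :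
    (∃ y, y ^ 2 - y = s) ∨ ∃ y, y ^ 2 - y = s + u := by
  have hmem (c : k) : c ∈ ((frobenius k 2 : k →+ k) - AddMonoidHom.id k).range ↔
      ∃ y, y ^ 2 - y = c := Iff.rfl
  have hadd := AddSubgroup.add_mem_iff_of_index_two (index_range_frobenius_sub_id k 2)
    (a := s) (b := u)
  simp only [hmem] at hadd
  have : ¬ ∃ y, y ^ 2 - y = u := by simpa using hu
  tauto

end ArtinSchreier

section Henselian

variable {R : Type*} [CommRing R] [HenselianLocalRing R] [CharP (ResidueField R) 2]

theorem exists_sq_sub_eq_of_residue {s : R} (hs : ∃ r, r ^ 2 - r = residue R s) :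
    ∃ z : R, z ^ 2 - z = s := by
  obtain ⟨r, hr⟩ := hs
  have hensel := ((HenselianLocalRing.TFAE R).out 0 1).mp ‹HenselianLocalRing R›
  have hmonic : (X ^ 2 - X - C s).Monic := by monicity!
  obtain ⟨z, hz, -⟩ := hensel _ hmonic r (by simp [hr])
    (by simp [one_add_one_eq_two, map_ofNat (residue R) 2, CharTwo.two_eq_zero])
  exact ⟨z, by simpa [sub_eq_zero] using hz⟩

theorem exists_sq_sub_eq_or_of_residue [Finite (ResidueField R)] {u : R}
    (hu : ∀ r, r ^ 2 - r ≠ residue R u) {s s' : R} (hs' : residue R s' = residue R (s + u)) :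
    (∃ z, z ^ 2 - z = s) ∨ ∃ z, z ^ 2 - z = s' :=
  (exists_sq_sub_eq_or_add _ hu (residue R s)).imp exists_sq_sub_eq_of_residue fun h =>
    exists_sq_sub_eq_of_residue (by rwa [hs', map_add])

end Henselian

section NormGroup

variable {R S : Type*} [CommRing R] [CommRing S]

/-- The group of units of `R` that are norms from the quadratic algebra `R[ω]`, where
`ω ^ 2 = a + b * ω`. -/
def quadraticNormGroup (a b : R) : Subgroup Rˣ :=
  (Units.map (QuadraticAlgebra.norm : QuadraticAlgebra R a b →* R)).range

variable {a b : R}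

theorem mem_quadraticNormGroup {c : Rˣ} :
    c ∈ quadraticNormGroup a b ↔ ∃ z : QuadraticAlgebra R a b, z.norm = c := by
  refine ⟨fun ⟨z, hz⟩ => ⟨z, congrArg Units.val hz⟩, fun ⟨z, hz⟩ => ?_⟩
  have hunit : IsUnit z := QuadraticAlgebra.isUnit_iff_norm_isUnit.mpr (hz ▸ c.isUnit)
  exact ⟨hunit.unit, Units.ext hz⟩

theorem map_mem_quadraticNormGroup (f : R →+* S) {c : Rˣ} (hc : c ∈ quadraticNormGroup a b) :
    Units.map (f : R →* S) c ∈ quadraticNormGroup (f a) (f b) := by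
  obtain ⟨z, hz⟩ := mem_quadraticNormGroup.mp hc
  refine mem_quadraticNormGroup.mpr ⟨⟨f z.re, f z.im⟩, ?_⟩
  simp [QuadraticAlgebra.norm_def, ← hz]

theorem sq_mem_quadraticNormGroup (c : Rˣ) : c ^ 2 ∈ quadraticNormGroup a b :=
  mem_quadraticNormGroup.mpr ⟨algebraMap R _ c, by simp⟩

theorem mem_quadraticNormGroup_of_eq_neg {c : Rˣ} (hc : a = -c) : c ∈ quadraticNormGroup a b :=
  mem_quadraticNormGroup.mpr ⟨QuadraticAlgebra.omega, by simp [QuadraticAlgebra.norm_def, hc]⟩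

end NormGroup

section EisensteinNorms

variable {R : Type*} [CommRing R] {π τ : R}

theorem norm_one_sub_mul_omega (y : R) :
    (⟨1, -(τ * y)⟩ : QuadraticAlgebra R (-π) (π * τ)).norm = 1 + π * τ ^ 2 * (y ^ 2 - y) := by
  simp only [QuadraticAlgebra.norm_def]
  ring

theorem exists_norm_eq_one_add_pow_mul_sq (h2 : π * τ ∣ 2) {k n : ℕ} (hτ : π ^ k ∣ τ)
    (hn : n ≤ 2 * k) (q : R) :
    ∃ (z : QuadraticAlgebra R (-π) (π * τ)) (g : R),
      z.norm = 1 + π ^ n * q ^ 2 + π ^ (n + 1) * g := by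
  have hdvd {i : ℕ} (hi : n ≤ k + i) : π ^ (n + 1) ∣ π * τ * π ^ i := by
    rw [mul_assoc, pow_succ']
    exact mul_dvd_mul_left π <| (pow_dvd_pow π hi).trans <| pow_add π k i ▸ mul_dvd_mul_right hτ _
  rcases n.even_or_odd' with ⟨i, rfl | rfl⟩
  · obtain ⟨g, hg⟩ := (hdvd (i := i) (by lia)).trans (mul_dvd_mul_right h2 _)
    refine ⟨⟨1 + π ^ i * q, 0⟩, g * q, ?_⟩
    simp only [QuadraticAlgebra.norm_def]
    linear_combination q * hg
  · obtain ⟨g, hg⟩ := hdvd (i := i) (by lia)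
    refine ⟨⟨1, π ^ i * q⟩, g * q, ?_⟩
    simp only [QuadraticAlgebra.norm_def]
    linear_combination q * hg

variable [IsLocalRing R]

theorem residue_eq_zero_iff_dvd (hπ : maximalIdeal R = Ideal.span {π}) {x : R} :
    residue R x = 0 ↔ π ∣ x := by
  rw [residue_eq_zero_iff, hπ, Ideal.mem_span_singleton]

theorem isUnit_one_add_mul (hπ : maximalIdeal R = Ideal.span {π}) (x : R) :
    IsUnit (1 + π * x) := by
  rw [← residue_ne_zero_iff_isUnit]
  simp [(residue_eq_zero_iff_dvd hπ).mpr dvd_rfl]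

variable [Finite (ResidueField R)] [CharP (ResidueField R) 2]

theorem exists_dvd_add_sq (hπ : maximalIdeal R = Ideal.span {π}) (c : R) :
    ∃ q, π ∣ c + q ^ 2 := by
  have := Fintype.ofFinite (ResidueField R)
  obtain ⟨r, hr⟩ := FiniteField.isSquare_of_char_two (ringChar.eq _ 2) (residue R c)
  obtain ⟨q, rfl⟩ := residue_surjective r
  refine ⟨q, ?_⟩
  rw [← residue_eq_zero_iff_dvd hπ, map_add, map_pow, hr, ← sq,
    CharTwo.add_self_eq_zero]

theorem exists_pow_dvd_mul_norm_sub_one (hπ : maximalIdeal R = Ideal.span {π}) (h2 : π * τ ∣ 2)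
    {k : ℕ} (hτ : π ^ k ∣ τ) (e : Rˣ) {n : ℕ} (hn : n ≤ 2 * k) :
    ∃ z : QuadraticAlgebra R (-π) (π * τ), π ^ (n + 1) ∣ e * z.norm - 1 := by
  induction n with
  | zero =>
    obtain ⟨q, hq⟩ := exists_dvd_add_sq hπ (↑e⁻¹ : R)
    refine ⟨algebraMap R _ q, ?_⟩
    have : e * q ^ 2 - 1 = e * (↑e⁻¹ + q ^ 2) - 2 := by rw [mul_add, e.mul_inv]; ring
    rw [QuadraticAlgebra.norm_algebraMap, zero_add, pow_one, this]
    exact dvd_sub (hq.mul_left _) (dvd_of_mul_right_dvd h2)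
  | succ n ih =>
    obtain ⟨z, c, hz⟩ := ih (by lia)
    obtain ⟨q, d, hq⟩ := exists_dvd_add_sq hπ c
    obtain ⟨w, g, hw⟩ := exists_norm_eq_one_add_pow_mul_sq h2 hτ hn q
    refine ⟨z * w, d + g + c * (π ^ n * q ^ 2 + π ^ (n + 1) * g), ?_⟩
    rw [map_mul, ← mul_assoc, eq_add_of_sub_eq hz, hw]
    linear_combination π ^ (n + 1) * hq

theorem exists_mem_quadraticNormGroup_mul_eq (hπ : maximalIdeal R = Ideal.span {π})
    (h2 : π * τ ∣ 2) {k : ℕ} (hτ : Associated τ (π ^ k)) (e : Rˣ) :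
    ∃ c ∈ quadraticNormGroup (-π) (π * τ), ∃ s, (e * c : R) = 1 + π * τ ^ 2 * s := by
  obtain ⟨z, hz⟩ := exists_pow_dvd_mul_norm_sub_one hπ h2 hτ.symm.dvd e le_rfl
  have hdvd : π * τ ^ 2 ∣ π ^ (2 * k + 1) := by
    rw [pow_succ' π, mul_comm 2 k, pow_mul]
    exact mul_dvd_mul_left π (pow_dvd_pow_of_dvd hτ.dvd 2)
  obtain ⟨s, hs⟩ := hdvd.trans hz
  rw [sub_eq_iff_eq_add'] at hs
  have hunit : IsUnit (e * z.norm) := by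
    rw [hs, mul_assoc]
    exact isUnit_one_add_mul hπ _
  obtain ⟨c, hc⟩ := isUnit_of_mul_isUnit_right hunit
  exact ⟨c, mem_quadraticNormGroup.mpr ⟨z, hc.symm⟩, s, hc ▸ hs⟩

end EisensteinNorms

section NormIndex

variable {R : Type*} [CommRing R] [HenselianLocalRing R] [Finite (ResidueField R)]
  [CharP (ResidueField R) 2] {π τ u : R}

theorem exists_norm_eq_one_add_or (hπ : maximalIdeal R = Ideal.span {π})
    (hu : ∀ r, r ^ 2 - r ≠ residue R u) (s : R) :
    (∃ z : QuadraticAlgebra R (-π) (π * τ), z.norm = 1 + π * τ ^ 2 * s) ∨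
      ∃ z : QuadraticAlgebra R (-π) (π * τ),
        z.norm = (1 + π * τ ^ 2 * s) * (1 + π * τ ^ 2 * u) := by
  have hres : residue R (s + u + π * τ ^ 2 * s * u) = residue R (s + u) := by
    simp [(residue_eq_zero_iff_dvd hπ).mpr dvd_rfl]
  rcases exists_sq_sub_eq_or_of_residue hu hres with ⟨y, hy⟩ | ⟨y, hy⟩
  · exact .inl ⟨⟨1, -(τ * y)⟩, by rw [norm_one_sub_mul_omega, hy]⟩
  · exact .inr ⟨⟨1, -(τ * y)⟩, by rw [norm_one_sub_mul_omega, hy]; ring⟩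

theorem unit_mem_quadraticNormGroup_or (hπ : maximalIdeal R = Ideal.span {π}) (h2 : π * τ ∣ 2)
    {k : ℕ} (hτ : Associated τ (π ^ k)) (hu : ∀ r, r ^ 2 - r ≠ residue R u) {b : Rˣ}
    (hb : (b : R) = 1 + π * τ ^ 2 * u) (e : Rˣ) :
    e ∈ quadraticNormGroup (-π) (π * τ) ∨ e * b ∈ quadraticNormGroup (-π) (π * τ) := by
  obtain ⟨c, hc, s, hs⟩ := exists_mem_quadraticNormGroup_mul_eq hπ h2 hτ e
  rw [← Subgroup.mul_mem_cancel_right _ hc, ← Subgroup.mul_mem_cancel_right _ hc (y := e * b),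
    mul_right_comm, mem_quadraticNormGroup, mem_quadraticNormGroup]
  simp only [Units.val_mul, hs, hb]
  exact exists_norm_eq_one_add_or hπ hu s

theorem mem_quadraticNormGroup_or [IsDomain R] [IsDiscreteValuationRing R] (F : Type*) [Field F]
    [Algebra R F] [IsFractionRing R F] (hπ : Irreducible π) (h2 : π * τ ∣ 2)
    (hτ : τ ≠ 0) (hu : ∀ r, r ^ 2 - r ≠ residue R u) {b : Fˣ}
    (hb : (b : F) = algebraMap R F (1 + π * τ ^ 2 * u)) (d : Fˣ) :
    d ∈ quadraticNormGroup (algebraMap R F (-π)) (algebraMap R F (π * τ)) ∨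
      d * b ∈ quadraticNormGroup (algebraMap R F (-π)) (algebraMap R F (π * τ)) := by
  have hmax := hπ.maximalIdeal_eq
  obtain ⟨k, hk⟩ := IsDiscreteValuationRing.associated_pow_irreducible hτ hπ
  obtain ⟨b', hb'⟩ : IsUnit (1 + π * τ ^ 2 * u) := by
    rw [mul_assoc]; exact isUnit_one_add_mul hmax _
  obtain rfl : b = Units.map (algebraMap R F) b' := Units.ext (by simp [hb, hb'])
  obtain ⟨n, e, hd⟩ :=
    IsDiscreteValuationRing.exists_units_eq_smul_zpow_of_irreducible (K := F) hπ d.ne_zero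
  let ϖ : Fˣ := Units.mk0 (algebraMap R F π) (by simpa using hπ.ne_zero)
  have hϖ : ϖ ^ n ∈ quadraticNormGroup (algebraMap R F (-π)) (algebraMap R F (π * τ)) :=
    zpow_mem (mem_quadraticNormGroup_of_eq_neg (by simp [ϖ])) n
  obtain rfl : d = Units.map (algebraMap R F) e * ϖ ^ n :=
    Units.ext (by simp [hd, ϖ, Units.smul_def, Algebra.smul_def])
  rw [mul_right_comm, Subgroup.mul_mem_cancel_right _ hϖ, Subgroup.mul_mem_cancel_right _ hϖ,
    ← map_mul]
  exact (unit_mem_quadraticNormGroup_or hmax h2 hk hu hb' e).imp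
    (map_mem_quadraticNormGroup _) (map_mem_quadraticNormGroup _)

end NormIndex

section InducesStar

open QuadraticAlgebra

variable {R B : Type*} [CommRing R] [Ring B] [Algebra R B] {a b : R}

/-- The element `j` of `B` induces, by conjugation, the involution `star` on the image of the
quadratic algebra `R[ω]` under `φ`. The condition is stated as `j * φ z = φ (star z) * j`, so `j`
need not be invertible. -/
def InducesStar (φ : QuadraticAlgebra R a b →ₐ[R] B) (j : B) : Prop :=
  ∀ z, SemiconjBy j (φ z) (φ (star z))

variable {φ : QuadraticAlgebra R a b →ₐ[R] B} {j : B}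

theorem inducesStar_of_omega (hj : SemiconjBy j (φ omega) (φ (star omega))) :
    InducesStar φ j := by
  rintro ⟨x, y⟩
  have hstar : star (⟨x, y⟩ : QuadraticAlgebra R a b) = algebraMap R _ x + y • star omega := by
    ext <;> simp [mul_comm]
  rw [hstar, mk_eq_add_smul_omega]
  simp only [map_add, map_smul, AlgHom.commutes]
  exact SemiconjBy.add_right (Algebra.commute_algebraMap_right x j) (hj.smul_right y)

theorem inducesStar_commutator (φ : QuadraticAlgebra R a b →ₐ[R] B) (x : B) :
    InducesStar φ (x * φ omega - φ omega * x) := by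
  refine inducesStar_of_omega ?_
  have hsq : φ omega * φ omega = algebraMap R B a + algebraMap R B b * φ omega := by
    rw [← map_mul, omega_mul_omega_eq_add]
    simp [Algebra.smul_def]
  have hstar : φ (star omega) = algebraMap R B b - φ omega := by
    rw [← AlgHom.commutes φ b, ← map_sub]
    congr 1
    ext <;> simp
  have hcomm (c : R) (y : B) : algebraMap R B c * y = y * algebraMap R B c := Algebra.commutes c y
  rw [SemiconjBy, hstar]
  calc (x * φ omega - φ omega * x) * φ omega
      = x * (φ omega * φ omega) - φ omega * x * φ omega := by noncomm_ring
    _ = (φ omega * φ omega) * x + algebraMap R B b * (x * φ omega)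
          - algebraMap R B b * (φ omega * x) - φ omega * x * φ omega := by
        rw [hsq, mul_add, add_mul, ← hcomm a x, ← mul_assoc x, ← hcomm b x]
        noncomm_ring
    _ = (algebraMap R B b - φ omega) * (x * φ omega - φ omega * x) := by noncomm_ring

theorem InducesStar.map_mul_left (hj : InducesStar φ j) (w : QuadraticAlgebra R a b) :
    InducesStar φ (φ w * j) :=
  fun z => SemiconjBy.mul_left ((Commute.all w (star z)).map φ) (hj z)

theorem InducesStar.map_mul_sq (hj : InducesStar φ j) (w : QuadraticAlgebra R a b) :
    (φ w * j) ^ 2 = algebraMap R B w.norm * j ^ 2 := by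
  rw [sq, mul_assoc, ← mul_assoc j, (hj w).eq, ← φ.commutes, algebraMap_norm_eq_mul_star, map_mul]
  noncomm_ring

theorem InducesStar.commute_sq (hj : InducesStar φ j) (z : QuadraticAlgebra R a b) :
    Commute (j ^ 2) (φ z) := by
  have := (hj (star z)).mul_left (hj z)
  rwa [star_star, ← sq] at this

end InducesStar

section QuaternionDivisionAlgebra

open QuadraticAlgebra

variable {F B : Type*} [Field F] [DivisionRing B] [Algebra F B] {a b : F}
  [Fact (∀ r : F, r ^ 2 ≠ a + b * r)] {φ : QuadraticAlgebra F a b →ₐ[F] B} {j : B}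

theorem exists_ne_zero_inducesStar (hcenter : Subalgebra.center F B = ⊥)
    (φ : QuadraticAlgebra F a b →ₐ[F] B) : ∃ j, j ≠ 0 ∧ InducesStar φ j := by
  obtain ⟨x, hx⟩ : ∃ x, x * φ omega ≠ φ omega * x := by
    by_contra! h
    have hmem : φ omega ∈ (⊥ : Subalgebra F B) := hcenter ▸ Subalgebra.mem_center_iff.mpr h
    obtain ⟨c, hc⟩ := Algebra.mem_bot.mp hmem
    rw [← φ.commutes] at hc
    simpa using congrArg im (φ.toRingHom.injective hc)
  exact ⟨_, sub_ne_zero.mpr hx, inducesStar_commutator φ x⟩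

variable (hω : star (omega : QuadraticAlgebra F a b) ≠ omega)
include hω

theorem eq_zero_of_inducesStar_map {z : QuadraticAlgebra F a b} (hz : InducesStar φ (φ z)) :
    z = 0 := by
  have h := hz omega
  rw [SemiconjBy, ← map_mul, ← map_mul] at h
  have h' : (star omega - omega) * z = 0 := by
    rw [sub_mul, ← φ.toRingHom.injective h, mul_comm, sub_self]
  exact (mul_eq_zero.mp h').resolve_left (sub_ne_zero.mpr hω)

theorem exists_map_add_map_mul_eq (hdim : Module.finrank F B = 4) (hj0 : j ≠ 0)
    (hj : InducesStar φ j) (x : B) : ∃ z w, φ z + φ w * j = x := by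
  let f : QuadraticAlgebra F a b × QuadraticAlgebra F a b →ₗ[F] B :=
    φ.toLinearMap.coprod (LinearMap.mulRight F j ∘ₗ φ.toLinearMap)
  have hinj : Function.Injective f := by
    refine (injective_iff_map_eq_zero f).mpr ?_
    rintro ⟨z, w⟩ (hzw : φ z + φ w * j = 0)
    have hw : φ w * j = φ (-z) := by rw [map_neg]; exact eq_neg_of_add_eq_zero_right hzw
    have hz : z = 0 := neg_eq_zero.mp (eq_zero_of_inducesStar_map hω (hw ▸ hj.map_mul_left w))
    simpa [hz, hj0] using hw
  have : FiniteDimensional F B := .of_finrank_pos (by lia)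
  have hfinrank : Module.finrank F (QuadraticAlgebra F a b × QuadraticAlgebra F a b) =
      Module.finrank F B := by
    rw [Module.finrank_prod, finrank_eq_two, hdim]
  obtain ⟨⟨z, w⟩, hzw⟩ :=
    (LinearMap.injective_iff_surjective_of_finrank_eq_finrank hfinrank).mp hinj x
  exact ⟨z, w, hzw⟩

theorem InducesStar.exists_sq_eq_algebraMap (hdim : Module.finrank F B = 4)
    (hcenter : Subalgebra.center F B = ⊥) (hj0 : j ≠ 0) (hj : InducesStar φ j) :
    ∃ d : Fˣ, j ^ 2 = algebraMap F B d := by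
  have hmem : j ^ 2 ∈ (⊥ : Subalgebra F B) := by
    rw [← hcenter, Subalgebra.mem_center_iff]
    intro x
    obtain ⟨z, w, rfl⟩ := exists_map_add_map_mul_eq hω hdim hj0 hj x
    exact ((hj.commute_sq z).add_right
      ((hj.commute_sq w).mul_right (Commute.pow_self j 2))).eq.symm
  obtain ⟨d, hd⟩ := Algebra.mem_bot.mp hmem
  have hd0 : d ≠ 0 := by
    rintro rfl
    exact pow_ne_zero 2 hj0 (by rw [← hd, map_zero])
  exact ⟨Units.mk0 d hd0, hd.symm⟩

theorem InducesStar.sq_notMem_quadraticNormGroup (hj : InducesStar φ j) {d : Fˣ}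
    (hd : j ^ 2 = algebraMap F B d) : d ∉ quadraticNormGroup a b := by
  intro hmem
  obtain ⟨w, hw⟩ := mem_quadraticNormGroup.mp (inv_mem hmem)
  have hsq : (φ w * j) ^ 2 = 1 := by
    rw [hj.map_mul_sq, hw, hd, ← map_mul, ← Units.val_mul, inv_mul_cancel, Units.val_one, map_one]
  have hwj := hj.map_mul_left w
  rcases sq_eq_one_iff.mp hsq with h | h
  · rw [h, ← map_one φ] at hwj
    exact one_ne_zero (eq_zero_of_inducesStar_map hω hwj)
  · rw [h, ← map_one φ, ← map_neg] at hwj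
    exact neg_ne_zero.mpr one_ne_zero (eq_zero_of_inducesStar_map hω hwj)

theorem exists_inducesStar_sq_eq (hdim : Module.finrank F B = 4)
    (hcenter : Subalgebra.center F B = ⊥) (φ : QuadraticAlgebra F a b →ₐ[F] B) {c : Fˣ}
    (hc : ∀ d : Fˣ, d ∈ quadraticNormGroup a b ∨ d * c ∈ quadraticNormGroup a b) :
    ∃ j, InducesStar φ j ∧ j ^ 2 = algebraMap F B c := by
  obtain ⟨j, hj0, hj⟩ := exists_ne_zero_inducesStar hcenter φ
  obtain ⟨d, hd⟩ := hj.exists_sq_eq_algebraMap hω hdim hcenter hj0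
  have hdc := (hc d).resolve_left (hj.sq_notMem_quadraticNormGroup hω hd)
  obtain ⟨w, hw⟩ := mem_quadraticNormGroup.mp (mul_mem hdc (sq_mem_quadraticNormGroup d⁻¹))
  refine ⟨φ w * j, hj.map_mul_left w, ?_⟩
  rw [hj.map_mul_sq, hw, hd, ← map_mul]
  congr 1
  push_cast
  field_simp

end QuaternionDivisionAlgebra

section Anticommuting

theorem add_add_mul_sq_of_anticommute {B : Type*} [Ring B] {x y : B} (hxy : x * y = -(y * x)) :
    (x + y + x * y) ^ 2 = x ^ 2 + y ^ 2 - x ^ 2 * y ^ 2 := by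
  have hyx : y * x = -(x * y) := by rw [hxy, neg_neg]
  have hyxy : y * (x * y) = -(x * y ^ 2) := by rw [← mul_assoc, hyx, neg_mul, mul_assoc, sq]
  have hxyx : x * y * x = -(x ^ 2 * y) := by rw [mul_assoc, hyx, mul_neg, ← mul_assoc, sq]
  have hxyxy : x * y * (x * y) = -(x ^ 2 * y ^ 2) := by
    rw [mul_assoc, hyxy, mul_neg, ← mul_assoc, sq x]
  calc (x + y + x * y) ^ 2
      = x ^ 2 + y ^ 2 + (x * y + y * x) + (x ^ 2 * y + x * y * x) + (x * y ^ 2 + y * (x * y))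
          + x * y * (x * y) := by noncomm_ring
    _ = x ^ 2 + y ^ 2 - x ^ 2 * y ^ 2 := by
        rw [hyx, hxyx, hyxy, hxyxy]
        abel

variable {F B : Type*} [Field F] (h2 : (2 : F) ≠ 0)
include h2

theorem half_one_add_sq_sub_self [DivisionRing B] [Algebra F B] {v : B} {u : F}
    (hv : v ^ 2 = algebraMap F B (1 + 4 * u)) :
    ((2 : B)⁻¹ * (1 + v)) ^ 2 - (2 : B)⁻¹ * (1 + v) = algebraMap F B u := by
  have hhalf : (2 : B)⁻¹ = algebraMap F B 2⁻¹ := by rw [map_inv₀, map_ofNat]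
  have hsq : (1 + v) ^ 2 = 1 + (2 : F) • v + (1 + 4 * u) • 1 := by
    rw [← Algebra.algebraMap_eq_smul_one, ← hv, ofNat_smul_eq_nsmul]
    noncomm_ring
  rw [hhalf, ← Algebra.smul_def, _root_.smul_pow, hsq, Algebra.algebraMap_eq_smul_one u]
  match_scalars <;> field_simp <;> ring

theorem exists_algHom_anticommute_of_inducesStar [Ring B] [Algebra F B] {a b : F} (hb : b ≠ 0)
    {ϑ : B} (hϑ : ϑ ^ 2 = algebraMap F B (1 + 4 * a / b ^ 2)) :
    ∃ φ : QuadraticAlgebra F a b →ₐ[F] B, ∀ j, InducesStar φ j → ϑ * j = -(j * ϑ) := by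
  have hroot : ((b / 2) • (1 - ϑ)) * ((b / 2) • (1 - ϑ)) = a • 1 + b • ((b / 2) • (1 - ϑ)) := by
    have hsq : (1 - ϑ) * (1 - ϑ) = 1 - (2 : F) • ϑ + (1 + 4 * a / b ^ 2) • 1 := by
      rw [← Algebra.algebraMap_eq_smul_one, ← hϑ, ofNat_smul_eq_nsmul]
      noncomm_ring
    rw [smul_mul_smul, hsq]
    match_scalars <;> field_simp
    ring
  let φ := QuadraticAlgebra.lift ⟨_, hroot⟩
  let ξ : QuadraticAlgebra F a b := ⟨1, -(2 / b)⟩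
  have hξ : φ ξ = ϑ := by
    simp only [φ, ξ, QuadraticAlgebra.lift_apply_apply]
    match_scalars <;> field_simp
    ring
  have hstar : star ξ = -ξ := by
    ext <;> simp only [ξ, QuadraticAlgebra.re_star, QuadraticAlgebra.im_star,
      QuadraticAlgebra.re_neg, QuadraticAlgebra.im_neg]
    field_simp
    ring
  refine ⟨φ, fun j hj => ?_⟩
  rw [← hξ, (hj ξ).eq, hstar, map_neg, neg_mul, neg_neg]

end Anticommuting

section Existence

variable {R : Type*} [CommRing R] [IsDomain R] {π τ : R}

theorem sq_ne_algebraMap_neg_add_mul [IsIntegrallyClosed R] (F : Type*) [Field F] [Algebra R F]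
    [IsFractionRing R F] (hπ : Prime π) (r : F) :
    r ^ 2 ≠ algebraMap R F (-π) + algebraMap R F (π * τ) * r := by
  intro hr
  have hint : IsIntegral R r := by
    refine ⟨X ^ 2 - C (π * τ) * X + C π, by monicity!, ?_⟩
    simp [hr]
  obtain ⟨w, rfl⟩ := IsIntegrallyClosed.isIntegral_iff.mp hint
  have hw : w ^ 2 = -π + π * τ * w := IsFractionRing.injective R F (by simpa using hr)
  obtain ⟨g, rfl⟩ : π ∣ w := hπ.dvd_of_dvd_pow (n := 2) ⟨τ * w - 1, by rw [hw]; ring⟩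
  refine hπ.not_isUnit (isUnit_iff_dvd_one.mpr ⟨τ * g - g ^ 2, mul_left_cancel₀ hπ.ne_zero ?_⟩)
  linear_combination hw

theorem exists_anticommute_sq_eq_algebraMap [IsDiscreteValuationRing R] [HenselianLocalRing R]
    [Finite (ResidueField R)] [CharP (ResidueField R) 2] {F : Type*} [Field F] [Algebra R F]
    [IsFractionRing R F] (hF : (2 : F) ≠ 0) (hπ : Irreducible π) (h2 : π * τ ∣ 2) (hτ : τ ≠ 0)
    {u : R} (hu : ∀ r, r ^ 2 - r ≠ residue R u) {B : Type*} [DivisionRing B] [Algebra F B]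
    (hdim : Module.finrank F B = 4) (hcenter : Subalgebra.center F B = ⊥) {ϑ : B}
    (hϑ : ϑ ^ 2 = algebraMap F B
      (1 + 4 * algebraMap R F (-π) / algebraMap R F (π * τ) ^ 2)) :
    ∃ ϑ' : B, ϑ * ϑ' = -(ϑ' * ϑ) ∧
      ϑ' ^ 2 = algebraMap F B (algebraMap R F (1 + π * τ ^ 2 * u)) := by
  have hb : algebraMap R F (π * τ) ≠ 0 := by simpa using ⟨hπ.ne_zero, hτ⟩
  have : Fact (∀ r : F, r ^ 2 ≠ algebraMap R F (-π) + algebraMap R F (π * τ) * r) :=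
    ⟨sq_ne_algebraMap_neg_add_mul F hπ.prime⟩
  have hunit : IsUnit (1 + π * τ ^ 2 * u) := by
    rw [mul_assoc]
    exact isUnit_one_add_mul hπ.maximalIdeal_eq _
  have hω : star (QuadraticAlgebra.omega :
      QuadraticAlgebra F (algebraMap R F (-π)) (algebraMap R F (π * τ))) ≠ .omega :=
    fun h => hb (by simpa using congrArg QuadraticAlgebra.re h)
  obtain ⟨φ, hφ⟩ := exists_algHom_anticommute_of_inducesStar hF hb hϑ
  obtain ⟨c, hc⟩ := hunit.map (algebraMap R F)
  obtain ⟨j, hj, hjsq⟩ := exists_inducesStar_sq_eq hω hdim hcenter φ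
    (mem_quadraticNormGroup_or F hπ h2 hτ hu hc)
  exact ⟨j, hφ j hj, hc ▸ hjsq⟩

end Existence

theorem exists_anticommuting_RU_generator_quaternion_general
    (R : Type*) [CommRing R] [IsDomain R] [IsDiscreteValuationRing R] [HenselianLocalRing R]
    [Finite (ResidueField R)] (F : Type*) [Field F] [Algebra R F] [IsFractionRing R F]
    (h2 : (2 : F) ≠ 0) (π₀ t : R) (hπ₀ : Irreducible π₀) (hπt : π₀ ∣ t) (ht2 : t ∣ 2)
    (B : Type*) [DivisionRing B] [Algebra F B]
    (hdim : Module.finrank F B = 4) (hcenter : Subalgebra.center F B = ⊥) (ϑ : B)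
    (hϑ : ϑ ^ 2 = algebraMap F B (1 - 4 * algebraMap R F π₀ / algebraMap R F t ^ 2))
    (u : R) (hnoroot : ∀ c : R, ¬ π₀ ∣ c ^ 2 - c - u) :
    (∃ ϑ' : B, ϑ * ϑ' = -(ϑ' * ϑ) ∧
        ϑ' ^ 2 = algebraMap F B
          (1 + algebraMap R F t ^ 2 / algebraMap R F π₀ * algebraMap R F u)) ∧
    ∀ ϑ' : B, ϑ * ϑ' = -(ϑ' * ϑ) →
      ϑ' ^ 2 = algebraMap F B
        (1 + algebraMap R F t ^ 2 / algebraMap R F π₀ * algebraMap R F u) →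
      ((2 : B)⁻¹ * (1 + ϑ + ϑ' + ϑ * ϑ')) ^ 2 - (2 : B)⁻¹ * (1 + ϑ + ϑ' + ϑ * ϑ')
        = algebraMap F B (algebraMap R F u) := by
  obtain ⟨τ, rfl⟩ := hπt
  have hinj := IsFractionRing.injective R F
  have hπF : algebraMap R F π₀ ≠ 0 := (map_ne_zero_iff _ hinj).mpr hπ₀.ne_zero
  have hτ : τ ≠ 0 := by
    rintro rfl
    rw [mul_zero, zero_dvd_iff] at ht2
    exact h2 (by rw [← map_ofNat (algebraMap R F) 2, ht2, map_zero])
  have hτF : algebraMap R F τ ≠ 0 := (map_ne_zero_iff _ hinj).mpr hτ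
  have hres {x : R} := residue_eq_zero_iff_dvd (x := x) hπ₀.maximalIdeal_eq
  have : CharP (ResidueField R) 2 := CharTwo.of_one_ne_zero_of_two_eq_zero one_ne_zero <| by
    simpa only [map_ofNat] using hres.mpr (dvd_of_mul_right_dvd ht2)
  have hu (r : ResidueField R) : r ^ 2 - r ≠ residue R u := by
    obtain ⟨c, rfl⟩ := residue_surjective r
    rw [← map_pow, ← map_sub, ← sub_ne_zero, ← map_sub, Ne, hres]
    exact hnoroot c
  constructor
  · convert exists_anticommute_sq_eq_algebraMap (F := F) h2 hπ₀ ht2 hτ hu hdim hcenter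
      (by rw [hϑ, map_neg, mul_neg, neg_div, sub_eq_add_neg]) using 6
    simp only [map_add, map_mul, map_one, map_pow]
    field_simp
  · intro ϑ' hanti hϑ'
    rw [add_assoc (1 : B), add_assoc (1 : B)]
    refine half_one_add_sq_sub_self h2 ?_
    rw [add_add_mul_sq_of_anticommute hanti, hϑ, hϑ', ← map_mul, ← map_add, ← map_sub, map_mul]
    congr 1
    field_simp
    ring

/-- **Anticommuting (R-U) generators in the quaternion algebra.**
Let `t, π₀ ∈ O_F` with `π₀` a uniformizer, `π₀ ∣ t` and `t ∣ 2` (the data of an (R-U)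
extension), let `B` be a quaternion division algebra over `F`, and let `ϑ ∈ B` satisfy
`ϑ² = (1 − 4π₀/t²)·1` (a unit of `O_F`).  Let `u ∈ O_F^×` be a unit such that
`X² − X − u` has no root modulo `π₀`.  Then there exists `ϑ̃ ∈ B` with `ϑ·ϑ̃ = −ϑ̃·ϑ` and
`ϑ̃² = (1 + (t²/π₀)·u)·1`; moreover, for any such `ϑ̃` the element
`γ = (1 + ϑ + ϑ̃ + ϑ·ϑ̃)/2 ∈ B` satisfies `γ² − γ = u·1`. -/
theorem exists_anticommuting_RU_generator_quaternion
    (F : Type*) [Field F] [Algebra ℚ_[2] F] [FiniteDimensional ℚ_[2] F]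
    [Algebra ℤ_[2] F] [IsScalarTower ℤ_[2] ℚ_[2] F]
    [IsLocalRing (integralClosure ℤ_[2] F)]
    (π₀ t : integralClosure ℤ_[2] F)
    (hπ₀ : IsLocalRing.maximalIdeal (integralClosure ℤ_[2] F) = Ideal.span {π₀})
    (hπt : π₀ ∣ t) (ht2 : t ∣ 2)
    (B : Type*) [DivisionRing B] [Algebra F B]
    (hdim : Module.finrank F B = 4)
    (hcenter : Subalgebra.center F B = ⊥)
    (ϑ : B) (hϑ : ϑ ^ 2 = algebraMap F B (1 - 4 * (π₀ : F) / (t : F) ^ 2))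
    (u : integralClosure ℤ_[2] F) (hu : IsUnit u)
    (hnoroot : ∀ c : integralClosure ℤ_[2] F, ¬ (π₀ ∣ (c ^ 2 - c - u))) :
    (∃ ϑ' : B, ϑ * ϑ' = - (ϑ' * ϑ) ∧
        ϑ' ^ 2 = algebraMap F B (1 + (t : F) ^ 2 / (π₀ : F) * (u : F))) ∧
    ∀ ϑ' : B, ϑ * ϑ' = - (ϑ' * ϑ) →
      ϑ' ^ 2 = algebraMap F B (1 + (t : F) ^ 2 / (π₀ : F) * (u : F)) →
      ((2 : B)⁻¹ * (1 + ϑ + ϑ' + ϑ * ϑ')) ^ 2 - (2 : B)⁻¹ * (1 + ϑ + ϑ' + ϑ * ϑ')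
        = algebraMap F B (u : F) := by
  have := isFractionRing_integralClosure_padicInt 2 F
  have := isDiscreteValuationRing_integralClosure_padicInt 2 F
  have := finite_residueField_integralClosure_padicInt 2 F
  have := henselianLocalRing_integralClosure_padicInt 2 F
  have : CharZero F := charZero_of_injective_algebraMap (algebraMap ℚ_[2] F).injective
  exact exists_anticommuting_RU_generator_quaternion_general _ F two_ne_zero π₀ t
    ((IsDiscreteValuationRing.irreducible_iff_uniformizer π₀).mpr hπ₀) hπt ht2 B hdim hcenter
    ϑ hϑ u hnoroot
end
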